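/- Let d ≥ 1, p ≥ 1, s ∈ (0,1), and let 1 ≤ k ≤ d be an integer. Assume α, β ∈ ℝ satisfy α, β, α+β ∈ (−k, sp) and sp ≠ k+α+β. Let X = C_c^1(ℝ^d) if sp < k+α+β and X = C_c^1(ℝ^d \ K) if sp > k+α+β. Then the infimum over all u ∈ X with u ≢ 0 of the ratio (∫_{ℝ^d} ∫_{ℝ^d} |u(x)−u(y)|^p |x−y|^{−d−sp} |x_k|^α |y_k|^β dx dy) / (∫_{ℝ^d} |u(x)|^p |x_k|^{α+β−sp} dx) equals 𝒞(d,s,p,k,α,β); i.e. the constant 𝒞(d,s,p,k,α,β) in the weighted fractional Hardy inequality with singularity on K is optimal. -/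

import Mathlib

/-!
Write `σ = sp`, `γ = (k + α + β - sp) / p` and `N x = |x_k|`. The power `w = N^(-γ)` is the virtual
ground state of the inequality, and both bounds come from comparing the energy of `u` with that
of `w`.

*Reduction to a model integral.* Translations in the last `m = d - k` variables, rotations of the
first `k` variables and dilations move any `x` with `x_k ≠ 0` to a fixed unit vector `e`. Hence
`∫ |x - y|^(-d-σ) g(N y / N x, |x - y| / N x) dy` is a power of `N x` times the integral `JJ` of
`|e - y|^(-d-σ) g(N y, |e - y|)` over `y` (`lintegral_kernel`). Integrating out the last `m`
variables, using polar coordinates in `ℝ^k`, and folding `(1, ∞)` onto `(0, 1)` by `r ↦ 1/r`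
identifies the sharp constant with `JJ` of `r^β |1 - r^(-γ)|^p` (`Adm.JJ_ground`).

*Lower bound.* With `t = w(y) / w(x)` there is a pointwise inequality (`point_ineq`)
`(1-t)₊^(p-1) |u x|^p + (1-1/t)₊^(p-1) |u y|^p
  ≤ |u x - u y|^p + (1/t-1)₊^(p-1) |u y|^p + (t-1)₊^(p-1) |u x|^p`,
a rearranged form, with nonnegative terms, of the ground state inequality. Its integral over
`{|log (N y / N x)| > ε}` involves only finite quantities (`Adm.cut_fin`), so that no principal
values are needed. After the inversion `r ↦ 1/r` the terms without `|u x - u y|^p` combine to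
`r^β |1 - r^(-γ)|^p` (`Adm.JJ_cut_eq`), and `ε → 0` gives the Hardy inequality (`Adm.lower`) by
monotone convergence. Both functionals are finite on test functions (`Adm.En_lt_top`), so the
quotient of Bochner integrals is the quotient of the extended nonnegative ones (`Adm.ratio_eq`).

*Sharpness.* Take `u = w v` with the cutoff `v x = φ(ε log N x) χ(x / R)`, which vanishes near `K`,
so that one family serves both classes of test functions. By convexity, for each `t ∈ (0, 1)`,
`|u x - u y|^p ≤ (1-t)^(1-p) |u x|^p |1 - w y / w x|^p + t^(1-p) (w y)^p |v x - v y|^p`. The first term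
integrates to `(1-t)^(1-p)` times the sharp constant times the Hardy integral of `u`. The second is
at most `t^(1-p)` times the Hardy integral of `w` over a region containing the support of `v` times a
quantity which tends to `0` with `ε` (`tendsto_JJ_GG`). Finally, the Hardy integral of `w` over that
region is at most `2 * 4^m` times the one over the region where `v = 1` (`Adm.Dset_doubling`), since
its density is `N^(-k)`: in polar coordinates it is a length in `log N` times a volume in the last `m`
variables. Thus the quotient of `u` exceeds the constant arbitrarily little (`Adm.sharp`).
-/

open MeasureTheory Real Set Filter Topology

noncomputable section

/-- Surface measure `|𝕊^m|` of the unit sphere `𝕊^m ⊆ ℝ^(m+1)`. -/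
def sphereVol (m : ℕ) : ℝ :=
  2 * Real.pi ^ (((m : ℝ) + 1) / 2) / Real.Gamma (((m : ℝ) + 1) / 2)

/-- The profile function `Φ_{d,s,p}(r)`. -/
def Phi (d : ℕ) (s p r : ℝ) : ℝ :=
  if d = 1 then (1 - r) ^ (-1 - s * p) + (1 + r) ^ (-1 - s * p)
  else sphereVol (d - 2) *
    ∫ t in Icc (-1 : ℝ) 1,
      (1 - t ^ 2) ^ (((d : ℝ) - 3) / 2) * (1 - 2 * t * r + r ^ 2) ^ (-(((d : ℝ) + s * p) / 2))

/-- The sharp constant `𝒞₁(d,s,p,α,β)` for the weighted fractional Hardy inequality with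
point singularity. -/
def C1 (d : ℕ) (s p a b : ℝ) : ℝ :=
  ∫ r in Ioo (0 : ℝ) 1,
    r ^ (s * p - 1) * (r ^ (-a) + r ^ (-b)) *
      |1 - r ^ (((d : ℝ) + a + b - s * p) / p)| ^ p * Phi d s p r

/-- The sharp constant `𝒞(d,s,p,k,α,β)` for the weighted fractional Hardy inequality with
singularity on a flat submanifold of codimension `k`. -/
def CC (d k : ℕ) (s p a b : ℝ) : ℝ :=
  Real.pi ^ (((d : ℝ) - (k : ℝ)) / 2) * Real.Gamma (((k : ℝ) + s * p) / 2) /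
    Real.Gamma (((d : ℝ) + s * p) / 2) * C1 k s p a b

/-- `|x_k|`: the Euclidean norm of the vector of the first `k` coordinates of `x ∈ ℝ^d`. -/
def pnorm (d k : ℕ) (x : EuclideanSpace ℝ (Fin d)) : ℝ :=
  Real.sqrt (∑ i : Fin d, if (i : ℕ) < k then x i ^ 2 else 0)

namespace FracHardy

/-! ### Coordinates, scaling and invariance -/

/-- The Euclidean space `ℝ^n`. -/
abbrev E (n : ℕ) := EuclideanSpace ℝ (Fin n)

/-- The isometry `ℝ^k × ℝ^m ≃ ℝ^(k+m)`. -/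
def joinE (k m : ℕ) : WithLp 2 (E k × E m) ≃ₗᵢ[ℝ] E (k + m) :=
  (PiLp.sumPiLpEquivProdLpPiLp (𝕜 := ℝ) 2 (fun _ : Fin k ⊕ Fin m => ℝ)).symm.trans
    (LinearIsometryEquiv.piLpCongrLeft 2 ℝ ℝ finSumFinEquiv)

/-- The point `(a, b) ∈ ℝ^(k+m)` with components `a ∈ ℝ^k` and `b ∈ ℝ^m`. -/
def jn {k m : ℕ} (a : E k) (b : E m) : E (k + m) := joinE k m (WithLp.toLp 2 (a, b))

variable {k m : ℕ}

lemma jn_sub (a a' : E k) (b b' : E m) : jn a b - jn a' b' = jn (a - a') (b - b') := by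
  unfold jn
  rw [← map_sub]
  rfl

lemma norm_jn (a : E k) (b : E m) : ‖jn a b‖ = √(‖a‖ ^ 2 + ‖b‖ ^ 2) := by
  unfold jn
  rw [LinearIsometryEquiv.norm_map, WithLp.prod_norm_eq_of_L2]
  rfl

lemma jn_castAdd (a : E k) (b : E m) (i : Fin k) : jn a b (Fin.castAdd m i) = a i := by
  simp [jn, joinE, LinearIsometryEquiv.piLpCongrLeft_apply, Equiv.piCongrLeft']

lemma jn_natAdd (a : E k) (b : E m) (i : Fin m) : jn a b (Fin.natAdd k i) = b i := by
  simp [jn, joinE, LinearIsometryEquiv.piLpCongrLeft_apply, Equiv.piCongrLeft']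

lemma exists_jn (x : E (k + m)) : ∃ (a : E k) (b : E m), x = jn a b := by
  refine ⟨((joinE k m).symm x).fst, ((joinE k m).symm x).snd, ?_⟩
  unfold jn
  rw [← LinearIsometryEquiv.symm_apply_eq]
  rfl

lemma pnorm_jn (a : E k) (b : E m) : pnorm (k + m) k (jn a b) = ‖a‖ := by
  rw [pnorm, EuclideanSpace.norm_eq, Fin.sum_univ_add]
  simp [jn_castAdd]

lemma measurePreserving_jn :
    MeasurePreserving (fun q : E k × E m => jn q.1 q.2) (volume.prod volume) volume :=
  (joinE k m).measurePreserving.comp (WithLp.volume_preserving_toLp (E k) (E m))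

lemma lintegral_split (f : E (k + m) → ENNReal) (hf : Measurable f) :
    ∫⁻ x, f x = ∫⁻ a : E k, ∫⁻ b : E m, f (jn a b) := by
  rw [← measurePreserving_jn.lintegral_comp hf]
  exact lintegral_prod _ (hf.comp measurePreserving_jn.measurable).aemeasurable

lemma measurable_jn : Measurable (fun q : E k × E m => jn q.1 q.2) :=
  measurePreserving_jn.measurable

lemma continuous_pnorm (d k : ℕ) : Continuous (pnorm d k) := by
  unfold pnorm
  refine Real.continuous_sqrt.comp (continuous_finsetSum _ fun i _ => ?_)
  split_ifs <;> fun_prop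

@[fun_prop]
lemma measurable_pnorm (d k : ℕ) : Measurable (pnorm d k) := (continuous_pnorm d k).measurable

lemma pnorm_nonneg (d k : ℕ) (x : E d) : 0 ≤ pnorm d k x := Real.sqrt_nonneg _

lemma pnorm_smul (d k : ℕ) (c : ℝ) (hc : 0 ≤ c) (x : E d) :
    pnorm d k (c • x) = c * pnorm d k x := by
  unfold pnorm
  rw [← Real.sqrt_sq hc, ← Real.sqrt_mul (by positivity), Real.sqrt_sq hc, Finset.mul_sum]
  congr 1
  refine Finset.sum_congr rfl fun i _ => ?_
  split_ifs
  · simp [mul_pow]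
  · simp

lemma pnorm_le_norm (x : E (k + m)) : pnorm (k + m) k x ≤ ‖x‖ := by
  obtain ⟨a, b, rfl⟩ := exists_jn x
  rw [pnorm_jn, norm_jn]
  exact Real.le_sqrt_of_sq_le (by nlinarith [sq_nonneg ‖b‖])

lemma abs_pnorm_sub_le (x y : E (k + m)) :
    |pnorm (k + m) k x - pnorm (k + m) k y| ≤ ‖x - y‖ := by
  obtain ⟨a, b, rfl⟩ := exists_jn x
  obtain ⟨a', b', rfl⟩ := exists_jn y
  rw [pnorm_jn, pnorm_jn]
  refine (abs_norm_sub_norm_le a a').trans ?_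
  rw [jn_sub, ← pnorm_jn (a - a') (b - b')]
  exact pnorm_le_norm _

lemma ae_pnorm_pos (hk : 1 ≤ k) : ∀ᵐ x : E (k + m), 0 < pnorm (k + m) k x := by
  have : NeZero k := ⟨by omega⟩
  have hS : MeasurableSet {x : E (k + m) | ¬ 0 < pnorm (k + m) k x} :=
    (measurableSet_lt measurable_const (measurable_pnorm _ _)).compl
  rw [ae_iff, ← lintegral_indicator_one hS, lintegral_split _ (measurable_one.indicator hS)]
  have h0 : ∀ᵐ a : E k, a ≠ 0 := by
    simp [ae_iff]
  rw [lintegral_eq_zero_iff' ]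
  · filter_upwards [h0] with a ha
    simp [indicator, pnorm_jn, ha]
  · refine AEMeasurable.lintegral_prod_right' (f := fun q : E k × E m =>
      {x | ¬0 < pnorm (k + m) k x}.indicator (1 : E (k + m) → ENNReal) (jn q.1 q.2)) ?_
    exact ((measurable_one.indicator hS).comp measurable_jn).aemeasurable

/-- Scaling of the Lebesgue integral. -/
lemma lintegral_scale {d : ℕ} (f : E d → ENNReal) (hf : Measurable f) (c : ℝ) (hc : 0 < c) :
    ∫⁻ x, f x = ENNReal.ofReal (c ^ d) * ∫⁻ x, f (c • x) := by
  have h := Measure.map_addHaar_smul (volume : Measure (E d)) hc.ne'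
  have h2 : ∫⁻ x, f (c • x) = ∫⁻ x, f x ∂(Measure.map (c • ·) (volume : Measure (E d))) :=
    (lintegral_map hf (measurable_const_smul c)).symm
  rw [h2, h, lintegral_smul_measure, smul_eq_mul, ← mul_assoc, ← ENNReal.ofReal_mul (by positivity),
    finrank_euclideanSpace, Fintype.card_fin, abs_of_pos (by positivity),
    mul_inv_cancel₀ (by positivity), ENNReal.ofReal_one, one_mul]

/-- Integrals of functions of `|y_k|` and `|x - y|` depend on `x` only through `|x_k|`, and scale:
translations in the last `m` variables, rotations of the first `k` variables and dilations move
any `x` with `x_k ≠ 0` to a fixed unit vector `(e, 0)`. -/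
lemma lintegral_invariance (e : E k) (he : ‖e‖ = 1) (x : E (k + m))
    (hx : 0 < pnorm (k + m) k x) (h : ℝ → ℝ → ENNReal) (hh : Measurable (Function.uncurry h)) :
    ∫⁻ y, h (pnorm (k + m) k y) ‖x - y‖ = ENNReal.ofReal (pnorm (k + m) k x ^ (k + m)) *
      ∫⁻ y, h (pnorm (k + m) k x * pnorm (k + m) k y)
        (pnorm (k + m) k x * ‖jn e (0 : E m) - y‖) := by
  set ν := pnorm (k + m) k x with hν
  have hmeas : ∀ z : E (k + m), Measurable fun y => h (pnorm (k + m) k y) ‖z - y‖ := fun z =>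
    hh.comp ((measurable_pnorm _ _).prodMk (by fun_prop))
  have key : ∫⁻ y, h (pnorm (k + m) k y) ‖x - y‖ =
      ∫⁻ y, h (pnorm (k + m) k y) ‖jn (ν • e) (0 : E m) - y‖ := by
    rw [lintegral_split _ (hmeas _), lintegral_split _ (hmeas _)]
    obtain ⟨x', x'', rfl⟩ := exists_jn x
    rw [pnorm_jn] at hν
    simp only [pnorm_jn, jn_sub, norm_jn]
    have htr : ∀ a : E k, ∫⁻ b : E m, h ‖a‖ √(‖x' - a‖ ^ 2 + ‖x'' - b‖ ^ 2) =
        ∫⁻ b : E m, h ‖a‖ √(‖x' - a‖ ^ 2 + ‖0 - b‖ ^ 2) := by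
      intro a
      have := lintegral_sub_left_eq_self (μ := (volume : Measure (E m)))
        (fun b => h ‖a‖ √(‖x' - a‖ ^ 2 + ‖b‖ ^ 2)) x''
      simp only [zero_sub, norm_neg]
      exact this
    simp only [htr]
    have hn : ‖x'‖ = ‖ν • e‖ := by
      rw [norm_smul, he, mul_one, hν, norm_norm]
    set R := (Submodule.span ℝ {x' - ν • e})ᗮ.reflection with hR
    have hRx : R x' = ν • e := Submodule.reflection_sub hn
    have hm : Measurable fun a : E k =>
        ∫⁻ b : E m, h ‖a‖ √(‖ν • e - a‖ ^ 2 + ‖0 - b‖ ^ 2) := by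
      refine Measurable.lintegral_prod_right' (f := fun q : E k × E m =>
        h ‖q.1‖ √(‖ν • e - q.1‖ ^ 2 + ‖0 - q.2‖ ^ 2)) ?_
      exact hh.comp (Measurable.prodMk (by fun_prop) (by fun_prop))
    rw [← R.measurePreserving.lintegral_comp hm]
    refine lintegral_congr fun a => ?_
    rw [← hRx, ← map_sub, R.norm_map, R.norm_map]
  rw [key, lintegral_scale _ (hmeas _) ν hx]
  congr 1
  refine lintegral_congr fun y => ?_
  have h1 : jn (ν • e) (0 : E m) = ν • jn e 0 := by
    unfold jn
    rw [← map_smul]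
    congr 1
    exact congrArg (WithLp.toLp 2) (Prod.ext rfl (smul_zero ν).symm)
  rw [pnorm_smul _ _ _ hx.le, h1, ← smul_sub, norm_smul, Real.norm_of_nonneg hx.le]

end FracHardy

namespace FracHardy

/-! ### Radial and marginal integrals -/

/-- Integration of radial functions in polar coordinates. -/
lemma lintegral_radial (n : ℕ) (f : ℝ → ENNReal) (hf : Measurable f) :
    ∫⁻ x : E (n + 1), f ‖x‖ =
      ENNReal.ofReal (sphereVol n) * ∫⁻ r in Ioi (0 : ℝ), ENNReal.ofReal (r ^ n) * f r := by
  set μ : Measure (E (n + 1)) := volume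
  have hdim : Module.finrank ℝ (E (n + 1)) = n + 1 := by simp
  have h1 : ∫⁻ x, f ‖x‖ ∂μ = ∫⁻ x : ({(0)}ᶜ : Set (E (n + 1))), f (‖x.1‖) ∂(μ.comap (↑)) := by
    rw [lintegral_subtype_comap (measurableSet_singleton _).compl (fun x => f ‖x‖),
      restrict_compl_singleton]
  have h2 := μ.measurePreserving_homeomorphUnitSphereProd.lintegral_comp_emb
    (Homeomorph.measurableEmbedding _) (fun q => f (q.2 : ℝ))
  simp only [homeomorphUnitSphereProd_apply_snd_coe] at h2
  have h3 : ∫⁻ q, f (q.2 : ℝ) ∂(μ.toSphere.prod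
      (Measure.volumeIoiPow (Module.finrank ℝ (E (n + 1)) - 1))) =
      μ.toSphere univ * ∫⁻ r : Ioi (0 : ℝ), f r ∂(Measure.volumeIoiPow n) := by
    rw [hdim, lintegral_prod _ (by fun_prop)]
    simp [mul_comm]
  have h4 : ∫⁻ r : Ioi (0 : ℝ), f r ∂(Measure.volumeIoiPow n) =
      ∫⁻ r in Ioi (0 : ℝ), ENNReal.ofReal (r ^ n) * f r := by
    rw [Measure.volumeIoiPow, lintegral_withDensity_eq_lintegral_mul _ (by fun_prop) (by fun_prop),
      ← lintegral_subtype_comap measurableSet_Ioi]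
    rfl
  rw [h1, h2, h3, h4, μ.toSphere_apply_univ, hdim, EuclideanSpace.volume_ball]
  congr 1
  rw [Fintype.card_fin, ENNReal.ofReal_one, one_pow, one_mul, ← ENNReal.ofReal_natCast,
    ← ENNReal.ofReal_mul (by positivity)]
  congr 1
  have hx : (0 : ℝ) < ((n : ℝ) + 1) / 2 := by positivity
  have hG := Real.Gamma_pos_of_pos hx
  push_cast
  rw [Real.Gamma_add_one hx.ne', sphereVol, Real.sqrt_eq_rpow, ← Real.rpow_natCast,
    ← Real.rpow_mul Real.pi_pos.le]
  rw [show (1 / 2 * ((n + 1 : ℕ) : ℝ)) = ((n : ℝ) + 1) / 2 by push_cast; ring]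
  field_simp

lemma integrableOn_gamma {q X : ℝ} (hq : 0 < q) (hX : 0 < X) :
    IntegrableOn (fun t : ℝ => t ^ (q - 1) * Real.exp (-(X * t))) (Ioi 0) := by
  by_contra hcon
  have h := integral_undef hcon
  rw [Real.integral_rpow_mul_exp_neg_mul_Ioi hq hX] at h
  have := Real.Gamma_pos_of_pos hq
  have : 0 < (1 / X) ^ q * Real.Gamma q := by positivity
  linarith

lemma lintegral_gamma {q X : ℝ} (hq : 0 < q) (hX : 0 < X) :
    ∫⁻ t in Ioi (0 : ℝ), ENNReal.ofReal (t ^ (q - 1) * Real.exp (-(X * t))) =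
      ENNReal.ofReal (X ^ (-q) * Real.Gamma q) := by
  rw [← ofReal_integral_eq_lintegral_ofReal (integrableOn_gamma hq hX),
    Real.integral_rpow_mul_exp_neg_mul_Ioi hq hX, one_div, Real.inv_rpow hX.le,
    Real.rpow_neg hX.le]
  filter_upwards [ae_restrict_mem measurableSet_Ioi] with t ht
  have : (0 : ℝ) < t := ht
  simp only [Pi.zero_apply]
  positivity

lemma lintegral_gaussian (m : ℕ) {t : ℝ} (ht : 0 < t) :
    ∫⁻ z : E m, ENNReal.ofReal (Real.exp (-t * ‖z‖ ^ 2)) =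
      ENNReal.ofReal ((Real.pi / t) ^ ((m : ℝ) / 2)) := by
  have h := GaussianFourier.integral_rexp_neg_mul_sq_norm (V := E m) ht
  rw [finrank_euclideanSpace, Fintype.card_fin] at h
  have hi : Integrable fun z : E m => Real.exp (-t * ‖z‖ ^ 2) := by
    by_contra hcon
    rw [integral_undef hcon] at h
    have := Real.pi_pos
    have : 0 < (Real.pi / t) ^ ((m : ℝ) / 2) := by positivity
    linarith
  rw [← ofReal_integral_eq_lintegral_ofReal hi (ae_of_all _ fun z => (Real.exp_pos _).le), h]

/-- The marginal of a power of `a + |z|²` over `z ∈ ℝ^m`, computed by writing the power as a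
Gamma integral of Gaussians. -/
lemma lintegral_marginal (m : ℕ) {a q : ℝ} (ha : 0 < a) (hq : (m : ℝ) / 2 < q) :
    ∫⁻ z : E m, ENNReal.ofReal ((a + ‖z‖ ^ 2) ^ (-q)) =
      ENNReal.ofReal (Real.pi ^ ((m : ℝ) / 2) * Real.Gamma (q - (m : ℝ) / 2) / Real.Gamma q *
        a ^ ((m : ℝ) / 2 - q)) := by
  have hq0 : 0 < q := lt_of_le_of_lt (by positivity) hq
  have hG := Real.Gamma_pos_of_pos hq0
  have hG2 := Real.Gamma_pos_of_pos (sub_pos.2 hq)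
  have hpi := Real.pi_pos
  have h1 : ∀ z : E m, ENNReal.ofReal ((a + ‖z‖ ^ 2) ^ (-q)) * ENNReal.ofReal (Real.Gamma q) =
      ∫⁻ t in Ioi (0 : ℝ),
        ENNReal.ofReal (t ^ (q - 1) * Real.exp (-((a + ‖z‖ ^ 2) * t))) := by
    intro z
    rw [lintegral_gamma hq0 (by positivity), ENNReal.ofReal_mul (by positivity)]
  have h2 : (∫⁻ z : E m, ENNReal.ofReal ((a + ‖z‖ ^ 2) ^ (-q))) * ENNReal.ofReal (Real.Gamma q) =
      ENNReal.ofReal (Real.pi ^ ((m : ℝ) / 2)) *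
        ENNReal.ofReal (a ^ (-(q - (m : ℝ) / 2)) * Real.Gamma (q - (m : ℝ) / 2)) := by
    rw [← lintegral_mul_const _ (by fun_prop)]
    simp only [h1]
    rw [lintegral_lintegral_swap (by fun_prop), ← lintegral_gamma (sub_pos.2 hq) ha,
      ← lintegral_const_mul _ (by fun_prop)]
    refine setLIntegral_congr_fun measurableSet_Ioi fun t ht => ?_
    have ht : (0 : ℝ) < t := ht
    have h3 : ∀ z : E m, ENNReal.ofReal (t ^ (q - 1) * Real.exp (-((a + ‖z‖ ^ 2) * t))) =
        ENNReal.ofReal (t ^ (q - 1) * Real.exp (-(a * t))) *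
          ENNReal.ofReal (Real.exp (-t * ‖z‖ ^ 2)) := by
      intro z
      rw [← ENNReal.ofReal_mul (by positivity), mul_assoc, ← Real.exp_add]
      congr 3
      ring
    simp only [h3]
    rw [lintegral_const_mul _ (by fun_prop), lintegral_gaussian m ht,
      ← ENNReal.ofReal_mul (by positivity), ← ENNReal.ofReal_mul (by positivity)]
    congr 1
    rw [Real.div_rpow hpi.le ht.le, show q - (m : ℝ) / 2 - 1 = (q - 1) - (m : ℝ) / 2 by ring,
      Real.rpow_sub ht (q - 1)]
    ring
  have h4 : ENNReal.ofReal (Real.Gamma q) ≠ 0 := by simpa using hG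
  rw [← ENNReal.mul_left_inj h4 ENNReal.ofReal_ne_top, h2, ← ENNReal.ofReal_mul (by positivity),
    ← ENNReal.ofReal_mul (by positivity)]
  congr 1
  rw [neg_sub]
  field_simp

/-- Finiteness of the integral of `(1 + |y|²)^(-(d+σ)/2) |y_k|^δ` for `-k < δ < σ`. -/
lemma lintegral_decay_lt_top (n m : ℕ) {σ δ : ℝ} (hσ : 0 < σ)
    (hδ : -((n + 1 : ℕ) : ℝ) < δ) (hδσ : δ < σ) :
    ∫⁻ y : E (n + 1 + m), ENNReal.ofReal ((1 + ‖y‖ ^ 2) ^ (-((((n + 1 + m : ℕ) : ℝ) + σ) / 2)) *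
      pnorm (n + 1 + m) (n + 1) y ^ δ) < ⊤ := by
  rw [lintegral_split _ (by fun_prop)]
  set q := (((n + 1 + m : ℕ) : ℝ) + σ) / 2 with hq
  have hqm : (m : ℝ) / 2 < q := by
    rw [hq]; push_cast
    have : (0 : ℝ) ≤ n := by positivity
    linarith
  set A := Real.pi ^ ((m : ℝ) / 2) * Real.Gamma (q - (m : ℝ) / 2) / Real.Gamma q with hA
  have h1 : ∀ a : E (n + 1), ∫⁻ b : E m, ENNReal.ofReal ((1 + ‖jn a b‖ ^ 2) ^ (-q) *
      pnorm (n + 1 + m) (n + 1) (jn a b) ^ δ) =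
      ENNReal.ofReal A * ENNReal.ofReal ((1 + ‖a‖ ^ 2) ^ ((m : ℝ) / 2 - q) * ‖a‖ ^ δ) := by
    intro a
    have h2 : ∀ b : E m, ENNReal.ofReal ((1 + ‖jn a b‖ ^ 2) ^ (-q) *
      pnorm (n + 1 + m) (n + 1) (jn a b) ^ δ) =
      ENNReal.ofReal (((1 + ‖a‖ ^ 2) + ‖b‖ ^ 2) ^ (-q)) * ENNReal.ofReal (‖a‖ ^ δ) := by
      intro b
      rw [pnorm_jn, norm_jn, Real.sq_sqrt (by positivity), ENNReal.ofReal_mul (by positivity),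
        add_assoc]
    simp only [h2]
    rw [lintegral_mul_const _ (by fun_prop), lintegral_marginal m (by positivity) hqm,
      ENNReal.ofReal_mul' (by positivity), ENNReal.ofReal_mul (by positivity), mul_assoc]
  simp only [h1]
  rw [lintegral_const_mul _ (by fun_prop)]
  refine ENNReal.mul_lt_top ENNReal.ofReal_lt_top ?_
  rw [lintegral_radial n (fun r => ENNReal.ofReal ((1 + r ^ 2) ^ ((m : ℝ) / 2 - q) * r ^ δ))
    (by fun_prop)]
  refine ENNReal.mul_lt_top ENNReal.ofReal_lt_top ?_
  have hneg : (m : ℝ) / 2 - q ≤ 0 := by linarith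
  rw [← Ioc_union_Ioi_eq_Ioi (zero_le_one' ℝ)]
  refine (lintegral_union_le _ _ _).trans_lt (ENNReal.add_lt_top.2 ⟨?_, ?_⟩)
  · have hi : IntegrableOn (fun r : ℝ => r ^ ((n : ℝ) + δ)) (Ioc 0 1) := by
      rw [← intervalIntegrable_iff_integrableOn_Ioc_of_le zero_le_one]
      refine intervalIntegral.intervalIntegrable_rpow' ?_
      push_cast at hδ
      linarith
    refine lt_of_le_of_lt (setLIntegral_mono' measurableSet_Ioc fun r hr => ?_)
      hi.lintegral_lt_top
    rw [← ENNReal.ofReal_mul (pow_nonneg hr.1.le _)]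
    refine ENNReal.ofReal_le_ofReal ?_
    have h1 : (1 + r ^ 2) ^ ((m : ℝ) / 2 - q) ≤ 1 :=
      Real.rpow_le_one_of_one_le_of_nonpos (by nlinarith [sq_nonneg r]) hneg
    rw [Real.rpow_add hr.1, Real.rpow_natCast]
    have h0 := Real.rpow_nonneg hr.1.le δ
    have h3 := pow_nonneg hr.1.le n
    gcongr
    nlinarith
  · have hi : IntegrableOn (fun r : ℝ => r ^ (-1 + δ - σ)) (Ioi 1) :=
      integrableOn_Ioi_rpow_of_lt (by linarith) zero_lt_one
    refine lt_of_le_of_lt (setLIntegral_mono' measurableSet_Ioi fun r hr => ?_)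
      hi.lintegral_lt_top
    have hr : (1 : ℝ) < r := hr
    have hr0 : (0 : ℝ) < r := by linarith
    rw [← ENNReal.ofReal_mul (by positivity)]
    refine ENNReal.ofReal_le_ofReal ?_
    have h1 : (1 + r ^ 2) ^ ((m : ℝ) / 2 - q) ≤ (r ^ 2) ^ ((m : ℝ) / 2 - q) :=
      Real.rpow_le_rpow_of_nonpos (by positivity) (by linarith) hneg
    have h2 : r ^ n * ((r ^ 2) ^ ((m : ℝ) / 2 - q) * r ^ δ) = r ^ (-1 + δ - σ) := by
      rw [← Real.rpow_natCast, ← Real.rpow_natCast, ← Real.rpow_mul hr0.le, ← Real.rpow_add hr0,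
        ← Real.rpow_add hr0]
      congr 1
      rw [hq]; push_cast; ring
    rw [← h2]
    gcongr

end FracHardy

namespace FracHardy

/-! ### Axial coordinates and inversion on the half-line -/

lemma measurePreserving_line :
    MeasurePreserving (fun t : ℝ => (WithLp.toLp 2 (fun _ => t) : E 1)) volume volume :=
  (PiLp.volume_preserving_toLp (Fin 1)).comp
    (volume_preserving_funUnique (Fin 1) ℝ).symm

/-- The unit vector `(0, …, 0, 1) ∈ ℝ^(n+1)`. -/
def eLast (n : ℕ) : E (n + 1) := jn (0 : E n) (WithLp.toLp 2 (fun _ => 1) : E 1)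

lemma norm_line (t : ℝ) : ‖(WithLp.toLp 2 (fun _ => t) : E 1)‖ = |t| := by
  simp [EuclideanSpace.norm_eq, Real.sqrt_sq_eq_abs]

lemma norm_eLast (n : ℕ) : ‖eLast n‖ = 1 := by
  rw [eLast, norm_jn, norm_line]; simp

/-- A function of `|a|` and `|e - a|` on `ℝ^(n+1)` integrated in cylindrical coordinates
around the axis spanned by `e`. -/
lemma lintegral_axis (n : ℕ) (F : ℝ → ℝ → ENNReal) (hF : Measurable (Function.uncurry F)) :
    ∫⁻ a : E (n + 1), F ‖eLast n - a‖ ‖a‖ =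
      ∫⁻ t : ℝ, ∫⁻ z : E n, F √(‖z‖ ^ 2 + (1 - t) ^ 2) √(‖z‖ ^ 2 + t ^ 2) := by
  have hm : Measurable fun a : E (n + 1) => F ‖eLast n - a‖ ‖a‖ :=
    hF.comp (Measurable.prodMk (by fun_prop) (by fun_prop))
  have hm2 : Measurable fun q : E n × E 1 => F ‖eLast n - jn q.1 q.2‖ ‖jn q.1 q.2‖ :=
    hm.comp measurable_jn
  have hm3 : Measurable (Function.uncurry
    fun (b : E n) (c : E 1) => F ‖eLast n - jn b c‖ ‖jn b c‖) := hm2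
  rw [lintegral_split _ hm, lintegral_lintegral_swap
    (f := fun (b : E n) (c : E 1) => F ‖eLast n - jn b c‖ ‖jn b c‖)
    (hm3.aemeasurable)]
  rw [← measurePreserving_line.lintegral_comp]
  · refine lintegral_congr fun t => lintegral_congr fun z => ?_
    have h : (WithLp.toLp 2 (fun _ => 1) : E 1) - WithLp.toLp 2 (fun _ => t) =
      WithLp.toLp 2 (fun _ => 1 - t) := rfl
    rw [eLast, jn_sub, norm_jn, norm_jn, h, norm_line, norm_line, sq_abs, sq_abs, zero_sub,
      norm_neg]
  · exact hm2.lintegral_prod_left'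

/-- Folding the half-line onto `(0, 1)` by `r ↦ 1/r`. -/
lemma lintegral_Ioi_zero_eq (f : ℝ → ENNReal) :
    ∫⁻ r in Ioi (0 : ℝ), f r = (∫⁻ r in Ioo (0 : ℝ) 1, f r) +
      ∫⁻ r in Ioo (0 : ℝ) 1, ENNReal.ofReal (r ^ (-2 : ℝ)) * f r⁻¹ := by
  have himg : (fun r : ℝ => r⁻¹) '' Ioo 0 1 = Ioi 1 := by
    ext x
    constructor
    · rintro ⟨r, hr, rfl⟩
      exact (one_lt_inv₀ hr.1).2 hr.2
    · intro hx
      have hx : (1 : ℝ) < x := hx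
      exact ⟨x⁻¹, ⟨by positivity, inv_lt_one_of_one_lt₀ hx⟩, inv_inv x⟩
  have h1 := lintegral_image_eq_lintegral_abs_deriv_mul (s := Ioo (0 : ℝ) 1)
    (f := fun r : ℝ => r⁻¹) (f' := fun r => -(r ^ 2)⁻¹) measurableSet_Ioo
    (fun x hx => (hasDerivAt_inv hx.1.ne').hasDerivWithinAt) inv_injective.injOn f
  rw [himg] at h1
  rw [← Ioc_union_Ioi_eq_Ioi (zero_le_one' ℝ),
    lintegral_union measurableSet_Ioi (Ioc_disjoint_Ioi le_rfl), h1, restrict_Ioo_eq_restrict_Ioc]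
  congr 1
  rw [← restrict_Ioo_eq_restrict_Ioc]
  refine setLIntegral_congr_fun measurableSet_Ioo fun r hr => ?_
  simp only [abs_neg]
  rw [abs_of_pos (by have := hr.1; positivity), Real.rpow_neg hr.1.le]
  norm_cast

lemma lintegral_real_eq (f : ℝ → ENNReal) (hf : Measurable f) :
    ∫⁻ t, f t = ∫⁻ t in Ioi (0 : ℝ), (f t + f (-t)) := by
  have h := (Measure.measurePreserving_neg (volume : Measure ℝ)).setLIntegral_comp_preimage_emb
    (MeasurableEquiv.neg ℝ).measurableEmbedding f (Iio 0)
  have h2 : Neg.neg ⁻¹' Iio (0 : ℝ) = Ioi 0 := by ext; simp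
  rw [h2] at h
  rw [lintegral_add_left hf, h, ← setLIntegral_univ f, ← Iic_union_Ioi (a := (0 : ℝ)),
    lintegral_union measurableSet_Ioi (Iic_disjoint_Ioi le_rfl), add_comm,
    restrict_Iio_eq_restrict_Iic]

/-- Polar coordinates for the kernel when `k = 1`, where the sphere is `{1, -1}`. -/
lemma polar_one (s p : ℝ) : ∃ Q : ℝ → ENNReal, Measurable Q ∧
    (∀ G : ℝ → ENNReal, Measurable G →
      ∫⁻ a : E (0 + 1), ENNReal.ofReal (‖eLast 0 - a‖ ^ (-((0 + 1 : ℕ) : ℝ) - s * p)) * G ‖a‖ =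
        ∫⁻ r in Ioi (0 : ℝ), ENNReal.ofReal (r ^ 0) * Q r * G r) ∧
    (∀ r ∈ Ioo (0 : ℝ) 1, Q r = ENNReal.ofReal (Phi (0 + 1) s p r)) ∧
    (∀ r ∈ Ioo (0 : ℝ) 1, Q r⁻¹ = ENNReal.ofReal (r ^ (((0 + 1 : ℕ) : ℝ) + s * p)) * Q r) := by
  refine ⟨fun r => ENNReal.ofReal (|1 - r| ^ (-1 - s * p) + |1 + r| ^ (-1 - s * p)), by fun_prop,
    ?_, ?_, ?_⟩
  · intro G hG
    rw [lintegral_axis 0 (fun t r => ENNReal.ofReal (t ^ (-((0 + 1 : ℕ) : ℝ) - s * p)) * G r)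
      (by fun_prop)]
    simp only [volume_euclideanSpace_eq_dirac, lintegral_dirac, norm_zero]
    rw [lintegral_real_eq _ (by fun_prop)]
    refine setLIntegral_congr_fun measurableSet_Ioi fun r hr => ?_
    have hr : (0 : ℝ) < r := hr
    have h1 : √(0 ^ 2 + (1 - r) ^ 2) = |1 - r| := by
      rw [← Real.sqrt_sq_eq_abs]; congr 1; ring
    have h2 : √(0 ^ 2 + (1 - -r) ^ 2) = |1 + r| := by
      rw [← Real.sqrt_sq_eq_abs]; congr 1; ring
    have h3 : √(0 ^ 2 + r ^ 2) = r := by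
      rw [← Real.sqrt_sq hr.le]; congr 1; rw [Real.sqrt_sq hr.le]; ring
    have h4 : √(0 ^ 2 + (-r) ^ 2) = r := by
      rw [neg_sq]; exact h3
    simp only [h1, h2, h3, h4]
    rw [← add_mul, ← ENNReal.ofReal_add (by positivity) (by positivity)]
    norm_num
  · intro r hr
    simp only [Phi, if_true, zero_add]
    rw [abs_of_pos (by linarith [hr.2]), abs_of_pos (by linarith [hr.1])]
  · intro r hr
    have hr0 := hr.1
    simp only
    rw [← ENNReal.ofReal_mul (by positivity), mul_add]
    congr 1
    have h1 : |1 - r⁻¹| = r⁻¹ * |1 - r| := by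
      rw [← abs_of_pos (inv_pos.2 hr0), ← abs_mul, abs_of_pos (inv_pos.2 hr0), abs_sub_comm]
      congr 1; field_simp
    have h2 : |1 + r⁻¹| = r⁻¹ * |1 + r| := by
      rw [← abs_of_pos (inv_pos.2 hr0), ← abs_mul, abs_of_pos (inv_pos.2 hr0)]
      congr 1; field_simp; ring
    have h3 : r⁻¹ ^ (-1 - s * p) = r ^ (((0 + 1 : ℕ) : ℝ) + s * p) := by
      rw [Real.inv_rpow hr0.le, ← Real.rpow_neg hr0.le]
      congr 1; push_cast; ring
    rw [h1, h2, Real.mul_rpow (by positivity) (by positivity),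
      Real.mul_rpow (by positivity) (by positivity), h3]

end FracHardy

namespace FracHardy

/-! ### Polar coordinates for the kernel -/

/-- The angular integral of the kernel on `ℝ^(n+2)` in polar coordinates. -/
def Qang (n : ℕ) (σ r : ℝ) : ENNReal :=
  ∫⁻ θ in Ioo 0 π, ENNReal.ofReal (Real.sin θ ^ n *
    (1 - 2 * Real.cos θ * r + r ^ 2) ^ (-(((n + 1 + 1 : ℕ) + σ) / 2)))

lemma measurable_Qang (n : ℕ) (σ : ℝ) : Measurable (Qang n σ) := by
  refine Measurable.lintegral_prod_right' (f := fun q : ℝ × ℝ =>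
    ENNReal.ofReal (Real.sin q.2 ^ n *
    (1 - 2 * Real.cos q.2 * q.1 + q.1 ^ 2) ^ (-(((n + 1 + 1 : ℕ) + σ) / 2)))) ?_
  fun_prop

lemma one_sub_sq_le (c r : ℝ) (hc : c ≤ 1) (hr : 0 ≤ r) : (1 - r) ^ 2 ≤ 1 - 2 * c * r + r ^ 2 := by
  nlinarith

/-- Reflection law of the angular integral, from
`1 - 2 r⁻¹ cos θ + r⁻² = r⁻² (1 - 2 r cos θ + r²)`. -/
lemma Qang_inv (n : ℕ) (σ : ℝ) {r : ℝ} (hr : 0 < r) :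
    Qang n σ r⁻¹ = ENNReal.ofReal (r ^ (((n + 1 + 1 : ℕ) : ℝ) + σ)) * Qang n σ r := by
  unfold Qang
  rw [← lintegral_const_mul' _ _ ENNReal.ofReal_ne_top]
  refine lintegral_congr fun θ => ?_
  rw [← ENNReal.ofReal_mul (by positivity)]
  congr 1
  have h1 : 1 - 2 * Real.cos θ * r⁻¹ + r⁻¹ ^ 2 =
      (r⁻¹) ^ 2 * (1 - 2 * Real.cos θ * r + r ^ 2) := by
    field_simp; ring
  have h0 := one_sub_sq_le (Real.cos θ) r (Real.cos_le_one θ) hr.le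
  have h2 : (r⁻¹ ^ 2) ^ (-(((n + 1 + 1 : ℕ) + σ) / 2)) = r ^ (((n + 1 + 1 : ℕ) : ℝ) + σ) := by
    rw [← Real.rpow_natCast, ← Real.rpow_mul (by positivity), Real.inv_rpow hr.le,
      ← Real.rpow_neg hr.le]
    congr 1; push_cast; ring
  rw [h1, Real.mul_rpow (by positivity) ((sq_nonneg _).trans h0), h2]
  ring

/-- The substitution `t = cos θ` turns the integral defining `Φ` into the angular integral. -/
lemma Phi_eq_Qang (n : ℕ) (s p : ℝ) {r : ℝ} (hr : r ∈ Ioo (0 : ℝ) 1)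
    (hq : 0 < s * p) :
    ENNReal.ofReal (sphereVol n) * Qang n (s * p) r = ENNReal.ofReal (Phi (n + 1 + 1) s p r) := by
  have hsv : 0 < sphereVol n := by
    unfold sphereVol
    have := Real.Gamma_pos_of_pos (show (0 : ℝ) < ((n : ℝ) + 1) / 2 by positivity)
    have := Real.pi_pos
    positivity
  have hn2 : n + 1 + 1 - 2 = n := by omega
  rw [Phi, if_neg (by omega), hn2, ENNReal.ofReal_mul hsv.le]
  congr 1
  set f : ℝ → ℝ := fun t => (1 - t ^ 2) ^ ((((n + 1 + 1 : ℕ) : ℝ) - 3) / 2) *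
    (1 - 2 * t * r + r ^ 2) ^ (-((((n + 1 + 1 : ℕ) : ℝ) + s * p) / 2)) with hf
  have hfm : Measurable f := by fun_prop
  have hf0 : ∀ t ∈ Icc (-1 : ℝ) 1, 0 ≤ f t := by
    intro t ht
    have h1 : 0 ≤ 1 - t ^ 2 := by nlinarith [ht.1, ht.2]
    have h2 := (sq_nonneg _).trans (one_sub_sq_le t r ht.2 hr.1.le)
    simp only [hf]
    positivity
  have key : ∫⁻ t in Icc (-1 : ℝ) 1, ENNReal.ofReal (f t) = Qang n (s * p) r := by
    rw [← Real.bijOn_cos.image_eq, lintegral_image_eq_lintegral_abs_deriv_mul measurableSet_Icc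
      (fun x _ => (Real.hasDerivAt_cos x).hasDerivWithinAt) Real.injOn_cos,
      ← restrict_Ioo_eq_restrict_Icc]
    refine setLIntegral_congr_fun measurableSet_Ioo fun θ hθ => ?_
    have hs := Real.sin_pos_of_mem_Ioo hθ
    rw [← ENNReal.ofReal_mul (abs_nonneg _), abs_neg, abs_of_pos hs]
    congr 1
    simp only [hf]
    have : 1 - Real.cos θ ^ 2 = Real.sin θ ^ 2 := by
      rw [← Real.sin_sq_add_cos_sq θ]; ring
    rw [this, ← mul_assoc]
    congr 1
    rw [← Real.rpow_natCast (Real.sin θ) 2, ← Real.rpow_mul hs.le]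
    nth_rw 1 [← Real.rpow_one (Real.sin θ)]
    rw [← Real.rpow_add hs, ← Real.rpow_natCast]
    congr 1; push_cast; ring
  have hfin : Qang n (s * p) r < ⊤ := by
    unfold Qang
    refine lt_of_le_of_lt (setLIntegral_mono (g := fun _ => ENNReal.ofReal
      (((1 - r) ^ 2) ^ (-(((n + 1 + 1 : ℕ) + s * p) / 2)))) measurable_const fun θ hθ => ?_) ?_
    · have hs := Real.sin_pos_of_mem_Ioo hθ
      have h0 := one_sub_sq_le (Real.cos θ) r (Real.cos_le_one θ) hr.1.le
      have hr2 : 0 < (1 - r) ^ 2 := by have := hr.2; exact pow_pos (by linarith) _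
      refine ENNReal.ofReal_le_ofReal ?_
      refine (mul_le_of_le_one_left (Real.rpow_nonneg (hr2.le.trans h0) _)
        (pow_le_one₀ hs.le (Real.sin_le_one θ))).trans ?_
      exact Real.rpow_le_rpow_of_nonpos hr2 h0 (by
        have : (0 : ℝ) ≤ ((n + 1 + 1 : ℕ) : ℝ) := by positivity
        linarith)
    · rw [setLIntegral_const]
      exact ENNReal.mul_lt_top ENNReal.ofReal_lt_top (by simp)
  rw [integral_eq_lintegral_of_nonneg_ae _ hfm.aestronglyMeasurable, key, ENNReal.ofReal_toReal hfin.ne]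
  exact (ae_restrict_mem measurableSet_Icc).mono fun t ht => hf0 t ht

/-- Polar coordinates for the kernel when `k ≥ 2`: cylindrical coordinates around the axis through `e`
leave an integral over a half-plane, to which planar polar coordinates apply. -/
lemma polar_ge (n : ℕ) (s p : ℝ) (G : ℝ → ENNReal) (hG : Measurable G) :
    ∫⁻ a : E (n + 1 + 1), ENNReal.ofReal (‖eLast (n + 1) - a‖ ^ (-((n + 1 + 1 : ℕ) : ℝ) - s * p)) *
      G ‖a‖ = ∫⁻ r in Ioi (0 : ℝ), ENNReal.ofReal (r ^ (n + 1)) *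
        (ENNReal.ofReal (sphereVol n) * Qang n (s * p) r) * G r := by
  rw [lintegral_axis (n + 1) (fun t r => ENNReal.ofReal (t ^ (-((n + 1 + 1 : ℕ) : ℝ) - s * p)) * G r)
      (by fun_prop)]
  set H : ℝ → ℝ → ENNReal := fun t ρ => ENNReal.ofReal (ρ ^ n) *
    (ENNReal.ofReal (√(ρ ^ 2 + (1 - t) ^ 2) ^ (-((n + 1 + 1 : ℕ) : ℝ) - s * p)) *
      G √(ρ ^ 2 + t ^ 2)) with hH
  have hHm : Measurable (Function.uncurry H) := by
    simp only [hH, Function.uncurry_def]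
    fun_prop
  have h1 : ∀ t : ℝ, ∫⁻ z : E (n + 1),
      ENNReal.ofReal (√(‖z‖ ^ 2 + (1 - t) ^ 2) ^ (-((n + 1 + 1 : ℕ) : ℝ) - s * p)) *
      G √(‖z‖ ^ 2 + t ^ 2) = ENNReal.ofReal (sphereVol n) * ∫⁻ ρ in Ioi (0 : ℝ), H t ρ := by
    intro t
    rw [lintegral_radial n (fun ρ => ENNReal.ofReal (√(ρ ^ 2 + (1 - t) ^ 2) ^
      (-((n + 1 + 1 : ℕ) : ℝ) - s * p)) * G √(ρ ^ 2 + t ^ 2)) (by fun_prop)]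
  simp only [h1]
  set F : ℝ × ℝ → ENNReal := fun q => (Ioi (0 : ℝ)).indicator (fun ρ => H q.1 ρ) q.2 with hF
  have hFm : Measurable F := by
    have : F = (Prod.snd ⁻¹' Ioi (0 : ℝ)).indicator (Function.uncurry H) := by
      ext q; simp [hF, indicator, Function.uncurry]
    rw [this]
    exact hHm.indicator (measurable_snd measurableSet_Ioi)
  have h2 : ∀ t, ∫⁻ ρ in Ioi (0 : ℝ), H t ρ = ∫⁻ ρ, F (t, ρ) := by
    intro t
    rw [← lintegral_indicator measurableSet_Ioi]
  simp only [h2]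
  rw [lintegral_const_mul' _ _ ENNReal.ofReal_ne_top, ← lintegral_prod _ hFm.aemeasurable]
  have h3 := lintegral_comp_polarCoord_symm F
  rw [← Measure.volume_eq_prod, ← h3, polarCoord_target, Measure.volume_eq_prod,
    ← Measure.prod_restrict]
  rw [lintegral_prod _ (by
    refine Measurable.aemeasurable ?_
    refine Measurable.mul (by fun_prop) (hFm.comp ?_)
    exact continuous_polarCoord_symm.measurable)]
  rw [← lintegral_const_mul' _ _ ENNReal.ofReal_ne_top]
  refine setLIntegral_congr_fun measurableSet_Ioi fun r hr => ?_
  have hr : (0 : ℝ) < r := hr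
  simp only [polarCoord_symm_apply, smul_eq_mul]
  rw [lintegral_const_mul' _ _ ENNReal.ofReal_ne_top]
  have h4 : ∫⁻ θ in Ioo (-π) π, F (r * Real.cos θ, r * Real.sin θ) =
      ENNReal.ofReal (r ^ n) * Qang n (s * p) r * G r := by
    have h5 : ∀ θ ∈ Ioo (-π) π, F (r * Real.cos θ, r * Real.sin θ) =
        (Ioo 0 π).indicator (fun θ => ENNReal.ofReal (r ^ n) * ENNReal.ofReal (Real.sin θ ^ n *
          (1 - 2 * Real.cos θ * r + r ^ 2) ^ (-(((n + 1 + 1 : ℕ) + s * p) / 2))) * G r) θ := by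
      intro θ hθ
      by_cases hθ0 : 0 < θ
      · have hm : θ ∈ Ioo 0 π := ⟨hθ0, hθ.2⟩
        have hs := Real.sin_pos_of_mem_Ioo hm
        have hm2 : r * Real.sin θ ∈ Ioi (0 : ℝ) := mul_pos hr hs
        simp only [hF]
        rw [indicator_of_mem hm, indicator_of_mem hm2]
        simp only [hH]
        have e1 : √((r * Real.sin θ) ^ 2 + (r * Real.cos θ) ^ 2) = r := by
          rw [← Real.sqrt_sq hr.le]; congr 1; rw [Real.sqrt_sq hr.le]
          linear_combination r ^ 2 * Real.sin_sq_add_cos_sq θ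
        have e2 : (r * Real.sin θ) ^ 2 + (1 - r * Real.cos θ) ^ 2 =
            1 - 2 * Real.cos θ * r + r ^ 2 := by
          linear_combination r ^ 2 * Real.sin_sq_add_cos_sq θ
        have h0 := (sq_nonneg _).trans (one_sub_sq_le (Real.cos θ) r (Real.cos_le_one θ) hr.le)
        rw [e1, e2, Real.sqrt_eq_rpow, ← Real.rpow_mul h0, mul_pow, ENNReal.ofReal_mul (by positivity),
          ENNReal.ofReal_mul (by positivity)]
        have e3 : 1 / 2 * (-((n + 1 + 1 : ℕ) : ℝ) - s * p) = -(((n + 1 + 1 : ℕ) + s * p) / 2) := by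
          ring
        rw [e3]; ring
      · have hm : θ ∉ Ioo 0 π := fun h => hθ0 h.1
        have hm2 : r * Real.sin θ ∉ Ioi (0 : ℝ) := by
          have := Real.sin_nonpos_of_nonpos_of_neg_pi_le (not_lt.1 hθ0) hθ.1.le
          simp only [mem_Ioi, not_lt]
          nlinarith
        simp only [hF]
        rw [indicator_of_notMem hm, indicator_of_notMem hm2]
    rw [setLIntegral_congr_fun measurableSet_Ioo h5, lintegral_indicator measurableSet_Ioo,
      Measure.restrict_restrict measurableSet_Ioo]
    have : Ioo 0 π ∩ Ioo (-π) π = Ioo 0 π :=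
      inter_eq_left.2 (Ioo_subset_Ioo (by linarith [Real.pi_pos]) le_rfl)
    rw [this, lintegral_mul_const _ (by fun_prop), lintegral_const_mul _ (by fun_prop)]
    rfl
  rw [h4, pow_succ, ENNReal.ofReal_mul (by positivity)]
  ring

/-- Polar coordinates for the kernel `|e - a|^{-k-sp}` on `ℝ^k`, `k = n + 1`: the spherical
integral is a density `Q` which coincides with `Φ_{k,s,p}` on `(0,1)` and satisfies a reflection
law under `r ↦ 1/r`. -/
lemma polar (n : ℕ) (s p : ℝ) (hq : 0 < s * p) : ∃ Q : ℝ → ENNReal, Measurable Q ∧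
    (∀ G : ℝ → ENNReal, Measurable G →
      ∫⁻ a : E (n + 1), ENNReal.ofReal (‖eLast n - a‖ ^ (-((n + 1 : ℕ) : ℝ) - s * p)) * G ‖a‖ =
        ∫⁻ r in Ioi (0 : ℝ), ENNReal.ofReal (r ^ n) * Q r * G r) ∧
    (∀ r ∈ Ioo (0 : ℝ) 1, Q r = ENNReal.ofReal (Phi (n + 1) s p r)) ∧
    (∀ r ∈ Ioo (0 : ℝ) 1, Q r⁻¹ = ENNReal.ofReal (r ^ (((n + 1 : ℕ) : ℝ) + s * p)) * Q r) := by
  cases n with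
  | zero => exact polar_one s p
  | succ n =>
    refine ⟨fun r => ENNReal.ofReal (sphereVol n) * Qang n (s * p) r,
      (measurable_Qang n _).const_mul _, polar_ge n s p, fun r hr => Phi_eq_Qang n s p hr hq,
      fun r hr => ?_⟩
    simp only
    rw [Qang_inv n _ hr.1]
    ring

end FracHardy

namespace FracHardy

/-! ### The model integral -/

/-- The model integral `∫ |e - y|^{-d-σ} h(|y_k|, |e - y|) dy` over `ℝ^d`, `d = k + m`,
`k = n + 1`, where `e ∈ ℝ^k × {0}` is a unit vector. -/
def JJ (n m : ℕ) (σ : ℝ) (h : ℝ → ℝ → ENNReal) : ENNReal :=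
  ∫⁻ y : E (n + 1 + m), ENNReal.ofReal
    (‖jn (eLast n) (0 : E m) - y‖ ^ (-((n + 1 + m : ℕ) : ℝ) - σ)) *
      h (pnorm (n + 1 + m) (n + 1) y) ‖jn (eLast n) (0 : E m) - y‖

variable {n m : ℕ} {σ : ℝ}

lemma norm_e : ‖jn (eLast n) (0 : E m)‖ = 1 := by
  rw [norm_jn, norm_eLast]; simp

lemma pnorm_e : pnorm (n + 1 + m) (n + 1) (jn (eLast n) (0 : E m)) = 1 := by
  rw [pnorm_jn, norm_eLast]

lemma JJ_mono {h h' : ℝ → ℝ → ENNReal}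
    (H : ∀ r t, 0 < r → 0 ≤ t → |r - 1| ≤ t → h r t ≤ h' r t) :
    JJ n m σ h ≤ JJ n m σ h' := by
  refine lintegral_mono_ae ?_
  filter_upwards [ae_pnorm_pos (k := n + 1) (m := m) (by omega)] with y hy
  gcongr
  refine H _ _ hy (norm_nonneg _) ?_
  have := abs_pnorm_sub_le (jn (eLast n) (0 : E m)) y
  rwa [pnorm_e, abs_sub_comm] at this

lemma JJ_congr {h h' : ℝ → ℝ → ENNReal}
    (H : ∀ r t, 0 < r → 0 ≤ t → |r - 1| ≤ t → h r t = h' r t) :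
    JJ n m σ h = JJ n m σ h' :=
  le_antisymm (JJ_mono fun r t hr ht h => (H r t hr ht h).le)
    (JJ_mono fun r t hr ht h => (H r t hr ht h).ge)

lemma JJ_const_mul (c : ENNReal) (hc : c ≠ ⊤) (h : ℝ → ℝ → ENNReal) :
    JJ n m σ (fun r t => c * h r t) = c * JJ n m σ h := by
  unfold JJ
  rw [← lintegral_const_mul' _ _ hc]
  refine lintegral_congr fun y => ?_
  ring

lemma JJ_meas {h : ℝ → ℝ → ENNReal} (hh : Measurable (Function.uncurry h)) :
    Measurable fun y : E (n + 1 + m) => h (pnorm (n + 1 + m) (n + 1) y)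
      ‖jn (eLast n) (0 : E m) - y‖ :=
  hh.comp ((measurable_pnorm _ _).prodMk (by fun_prop))

lemma JJ_add {h h' : ℝ → ℝ → ENNReal} (hh : Measurable (Function.uncurry h)) :
    JJ n m σ (fun r t => h r t + h' r t) = JJ n m σ h + JJ n m σ h' := by
  unfold JJ
  rw [← lintegral_add_left]
  · refine lintegral_congr fun y => ?_
    ring
  · exact Measurable.mul (by fun_prop) (JJ_meas hh)

/-- Scaling of the kernel integral with the first point fixed. -/
lemma lintegral_kernel (x : E (n + 1 + m)) (hx : 0 < pnorm (n + 1 + m) (n + 1) x) (b : ℝ)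
    (g : ℝ → ℝ → ENNReal) (hg : Measurable (Function.uncurry g)) :
    ∫⁻ y, ENNReal.ofReal (‖x - y‖ ^ (-((n + 1 + m : ℕ) : ℝ) - σ) *
        pnorm (n + 1 + m) (n + 1) y ^ b) *
      g (pnorm (n + 1 + m) (n + 1) y / pnorm (n + 1 + m) (n + 1) x)
        (‖x - y‖ / pnorm (n + 1 + m) (n + 1) x) =
    ENNReal.ofReal (pnorm (n + 1 + m) (n + 1) x ^ (b - σ)) *
      JJ n m σ (fun r t => ENNReal.ofReal (r ^ b) * g r t) := by
  set ν := pnorm (n + 1 + m) (n + 1) x with hν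
  have hm : Measurable (Function.uncurry fun r t : ℝ =>
      ENNReal.ofReal (t ^ (-((n + 1 + m : ℕ) : ℝ) - σ) * r ^ b) * g (r / ν) (t / ν)) := by
    have : Measurable fun q : ℝ × ℝ => g (q.1 / ν) (q.2 / ν) :=
      hg.comp (Measurable.prodMk (by fun_prop) (by fun_prop))
    simp only [Function.uncurry_def]
    exact Measurable.mul (by fun_prop) this
  have h := lintegral_invariance (eLast n) (norm_eLast n) x hx _ hm
  rw [h, ← hν]
  unfold JJ
  rw [← lintegral_const_mul' _ _ ENNReal.ofReal_ne_top,
    ← lintegral_const_mul' _ _ ENNReal.ofReal_ne_top]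
  refine lintegral_congr fun y => ?_
  have hy := pnorm_nonneg (n + 1 + m) (n + 1) y
  have ht := norm_nonneg (jn (eLast n) (0 : E m) - y)
  rw [mul_div_cancel_left₀ _ hx.ne', mul_div_cancel_left₀ _ hx.ne',
    Real.mul_rpow hx.le ht, Real.mul_rpow hx.le hy]
  simp only [← mul_assoc]
  congr 1
  rw [← ENNReal.ofReal_mul (by positivity), ← ENNReal.ofReal_mul (by positivity),
    ← ENNReal.ofReal_mul (by positivity)]
  congr 1
  have : ν ^ (b - σ) = ν ^ (n + 1 + m) * ν ^ (-((n + 1 + m : ℕ) : ℝ) - σ) * ν ^ b := by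
    rw [← Real.rpow_natCast, ← Real.rpow_add hx, ← Real.rpow_add hx]
    congr 1; ring
  rw [this]; ring

/-- The constant produced by integrating out the last `m` variables. -/
def Amar (n m : ℕ) (σ : ℝ) : ℝ :=
  Real.pi ^ ((m : ℝ) / 2) * Real.Gamma ((((n + 1 : ℕ) : ℝ) + σ) / 2) /
    Real.Gamma ((((n + 1 + m : ℕ) : ℝ) + σ) / 2)

lemma Amar_pos (hσ : 0 < σ) : 0 < Amar n m σ := by
  unfold Amar
  have := Real.Gamma_pos_of_pos (show (0 : ℝ) < (((n + 1 : ℕ) : ℝ) + σ) / 2 by positivity)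
  have := Real.Gamma_pos_of_pos (show (0 : ℝ) < (((n + 1 + m : ℕ) : ℝ) + σ) / 2 by positivity)
  have := Real.pi_pos
  positivity

/-- Integrating out the last `m` variables replaces the kernel on `ℝ^d` by the one on `ℝ^k`. -/
lemma JJ_marginal (hσ : 0 < σ) (g : ℝ → ENNReal) (hg : Measurable g) :
    JJ n m σ (fun r _ => g r) = ENNReal.ofReal (Amar n m σ) *
      ∫⁻ a : E (n + 1), ENNReal.ofReal (‖eLast n - a‖ ^ (-((n + 1 : ℕ) : ℝ) - σ)) * g ‖a‖ := by
  unfold JJ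
  rw [lintegral_split _ (by fun_prop), ← lintegral_const_mul' _ _ ENNReal.ofReal_ne_top]
  have h0 : ∀ᵐ a : E (n + 1), a ≠ eLast n := by simp [ae_iff]
  refine lintegral_congr_ae ?_
  filter_upwards [h0] with a ha
  have ha' : 0 < ‖eLast n - a‖ := norm_pos_iff.2 (sub_ne_zero.2 ha.symm)
  simp only [pnorm_jn, jn_sub, norm_jn, zero_sub, norm_neg]
  rw [lintegral_mul_const _ (by fun_prop), ← mul_assoc, ← ENNReal.ofReal_mul (Amar_pos hσ).le]
  congr 1
  have hq : (m : ℝ) / 2 < (((n + 1 + m : ℕ) : ℝ) + σ) / 2 := by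
    push_cast
    have : (0 : ℝ) ≤ n := by positivity
    linarith
  have h := lintegral_marginal m (pow_pos ha' 2) hq
  have e1 : (((n + 1 + m : ℕ) : ℝ) + σ) / 2 - (m : ℝ) / 2 = (((n + 1 : ℕ) : ℝ) + σ) / 2 := by
    push_cast; ring
  have e2 : (‖eLast n - a‖ ^ 2) ^ ((m : ℝ) / 2 - (((n + 1 + m : ℕ) : ℝ) + σ) / 2) =
      ‖eLast n - a‖ ^ (-((n + 1 : ℕ) : ℝ) - σ) := by
    rw [← Real.rpow_natCast, ← Real.rpow_mul ha'.le]
    congr 1; push_cast; ring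
  rw [e1, e2] at h
  unfold Amar
  rw [← h]
  refine lintegral_congr fun b => ?_
  rw [Real.sqrt_eq_rpow, ← Real.rpow_mul (by positivity)]
  congr 2; ring

/-- The model integral in polar coordinates, folded onto `(0,1)`. -/
lemma JJ_polar (n m : ℕ) (s p : ℝ) (hq : 0 < s * p) (g : ℝ → ENNReal) (hg : Measurable g) :
    JJ n m (s * p) (fun r _ => g r) = ENNReal.ofReal (Amar n m (s * p)) *
      ∫⁻ r in Ioo (0 : ℝ) 1, ENNReal.ofReal (Phi (n + 1) s p r) *
        (ENNReal.ofReal (r ^ (n : ℝ)) * g r + ENNReal.ofReal (r ^ (s * p - 1)) * g r⁻¹) := by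
  obtain ⟨Q, hQm, hQ, hQ1, hQ2⟩ := polar n s p hq
  rw [JJ_marginal hq g hg, hQ g hg, lintegral_Ioi_zero_eq, ← lintegral_add_left (by fun_prop)]
  congr 1
  refine setLIntegral_congr_fun measurableSet_Ioo fun r hr => ?_
  have hr0 := hr.1
  rw [← hQ1 r hr, hQ2 r hr, mul_add]
  have e1 : ENNReal.ofReal (r ^ (s * p - 1)) = ENNReal.ofReal (r ^ (-2 : ℝ)) *
      ENNReal.ofReal (r⁻¹ ^ n) * ENNReal.ofReal (r ^ (((n + 1 : ℕ) : ℝ) + s * p)) := by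
    rw [← ENNReal.ofReal_mul (by positivity), ← ENNReal.ofReal_mul (by positivity)]
    congr 1
    rw [← Real.rpow_natCast, Real.inv_rpow hr0.le, ← Real.rpow_neg hr0.le, ← Real.rpow_add hr0,
      ← Real.rpow_add hr0]
    congr 1; push_cast; ring
  rw [e1, Real.rpow_natCast]
  ring

/-- Inversion `r ↦ 1/r` of a model integral. -/
lemma JJ_inv (n m : ℕ) (s p : ℝ) (hq : 0 < s * p) (g : ℝ → ENNReal) (hg : Measurable g) :
    JJ n m (s * p) (fun r _ => g r) =
      JJ n m (s * p) (fun r _ => ENNReal.ofReal (r ^ (s * p - ((n + 1 : ℕ) : ℝ))) * g r⁻¹) := by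
  rw [JJ_polar n m s p hq g hg, JJ_polar n m s p hq _ (by fun_prop)]
  congr 1
  refine setLIntegral_congr_fun measurableSet_Ioo fun r hr => ?_
  have hr0 := hr.1
  have e1 : ENNReal.ofReal (r ^ (s * p - 1)) * ENNReal.ofReal (r⁻¹ ^ (s * p - ((n + 1 : ℕ) : ℝ))) =
      ENNReal.ofReal (r ^ (n : ℝ)) := by
    rw [← ENNReal.ofReal_mul (by positivity), Real.inv_rpow hr0.le, ← Real.rpow_neg hr0.le,
      ← Real.rpow_add hr0]
    congr 2; push_cast; ring
  have e2 : ENNReal.ofReal (r ^ (n : ℝ)) * ENNReal.ofReal (r ^ (s * p - ((n + 1 : ℕ) : ℝ))) =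
      ENNReal.ofReal (r ^ (s * p - 1)) := by
    rw [← ENNReal.ofReal_mul (by positivity), ← Real.rpow_add hr0]
    congr 2; push_cast; ring
  rw [inv_inv, ← mul_assoc _ _ (g r), ← mul_assoc _ _ (g r⁻¹), e1, e2]
  exact congrArg _ (add_comm _ _)

/-! ### Finiteness of the model integrals -/

/-- Local integrability of `|z - y|^(η-D)` for `η > 0`. -/
lemma lintegral_ball_rpow_lt_top (D : ℕ) (hD : 1 ≤ D) {η : ℝ} (hη : 0 < η) (z : E D) :
    ∫⁻ y : E D, (Iio (1 / 2 : ℝ)).indicator (fun t => ENNReal.ofReal (t ^ (η - D))) ‖z - y‖ < ⊤ := by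
  obtain ⟨N, rfl⟩ : ∃ N, D = N + 1 := ⟨D - 1, by omega⟩
  have h := lintegral_sub_left_eq_self (μ := (volume : Measure (E (N + 1))))
    (fun y => (Iio (1 / 2 : ℝ)).indicator (fun t => ENNReal.ofReal (t ^ (η - (N + 1 : ℕ)))) ‖y‖) z
  rw [h, lintegral_radial N _ (Measurable.indicator (by fun_prop) measurableSet_Iio)]
  refine ENNReal.mul_lt_top ENNReal.ofReal_lt_top ?_
  have h2 : ∫⁻ r in Ioi (0 : ℝ), ENNReal.ofReal (r ^ N) *
      (Iio (1 / 2 : ℝ)).indicator (fun t => ENNReal.ofReal (t ^ (η - (N + 1 : ℕ)))) r =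
      ∫⁻ r in Ioo (0 : ℝ) (1 / 2), ENNReal.ofReal (r ^ (η - 1)) := by
    rw [← lintegral_indicator measurableSet_Ioi, ← lintegral_indicator measurableSet_Ioo]
    refine lintegral_congr fun r => ?_
    by_cases hr : 0 < r
    · by_cases hr2 : r < 1 / 2
      · rw [indicator_of_mem (by exact hr), indicator_of_mem (by exact hr2),
          indicator_of_mem (by exact ⟨hr, hr2⟩), ← ENNReal.ofReal_mul (by positivity),
          ← Real.rpow_natCast, ← Real.rpow_add hr]
        congr 2; push_cast; ring
      · rw [indicator_of_mem (by exact hr), indicator_of_notMem (by exact hr2),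
          indicator_of_notMem (by exact fun h => hr2 h.2), mul_zero]
    · rw [indicator_of_notMem (by exact hr), indicator_of_notMem (by exact fun h => hr h.1)]
  rw [h2]
  have hi := (intervalIntegral.intervalIntegrable_rpow' (a := 0) (b := 1 / 2)
    (show -1 < η - 1 by linarith)).1
  rw [restrict_Ioo_eq_restrict_Ioc]
  exact hi.lintegral_lt_top

lemma rpow_le_of_near {r δ : ℝ} (h1 : 1 / 2 ≤ r) (h2 : r ≤ 2) : r ^ δ ≤ 2 ^ |δ| := by
  have hr : 0 < r := by linarith
  rcases le_total 0 δ with h | h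
  · rw [abs_of_nonneg h]
    exact Real.rpow_le_rpow hr.le h2 h
  · rw [abs_of_nonpos h]
    have : (2 : ℝ) ^ (-δ) = (1 / 2) ^ δ := by
      rw [one_div, Real.inv_rpow (by norm_num), Real.rpow_neg (by norm_num)]
    rw [this]
    exact Real.rpow_le_rpow_of_nonpos (by norm_num) h1 h

/-- The basic integrability fact: on the diagonal the factor `min(1, |e - y|)^p` compensates the
kernel since `σ < p`; at the singular set `|y_k| = 0` and at infinity the range of `δ` is used. -/
lemma JJ_lt_top {p δ : ℝ} (hσ : 0 < σ) (hσp : σ < p) (hδ : -((n + 1 : ℕ) : ℝ) < δ) (hδσ : δ < σ) :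
    JJ n m σ (fun r t => ENNReal.ofReal (r ^ δ * min 1 t ^ p)) < ⊤ := by
  have hA := lintegral_ball_rpow_lt_top (n + 1 + m) (by omega) (sub_pos.2 hσp)
    (jn (eLast n) (0 : E m))
  have hB := lintegral_decay_lt_top n m hσ hδ hδσ
  set q := (((n + 1 + m : ℕ) : ℝ) + σ) / 2 with hq
  have hq0 : 0 < q := by positivity
  have hfin : ENNReal.ofReal (2 ^ |δ|) * (∫⁻ y : E (n + 1 + m),
      (Iio (1 / 2 : ℝ)).indicator (fun t => ENNReal.ofReal (t ^ (p - σ - (n + 1 + m : ℕ))))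
        ‖jn (eLast n) (0 : E m) - y‖) + ENNReal.ofReal (13 ^ q) *
      ∫⁻ y : E (n + 1 + m), ENNReal.ofReal ((1 + ‖y‖ ^ 2) ^ (-q) *
        pnorm (n + 1 + m) (n + 1) y ^ δ) < ⊤ :=
    ENNReal.add_lt_top.2 ⟨ENNReal.mul_lt_top ENNReal.ofReal_lt_top hA,
      ENNReal.mul_lt_top ENNReal.ofReal_lt_top hB⟩
  refine lt_of_le_of_lt ?_ hfin
  rw [← lintegral_const_mul' _ _ ENNReal.ofReal_ne_top,
    ← lintegral_const_mul' _ _ ENNReal.ofReal_ne_top, ← lintegral_add_right _ (by fun_prop)]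
  refine lintegral_mono fun y => ?_
  set t := ‖jn (eLast n) (0 : E m) - y‖ with ht
  set r := pnorm (n + 1 + m) (n + 1) y with hr
  have hr0 : 0 ≤ r := pnorm_nonneg _ _ _
  have ht0 : 0 ≤ t := norm_nonneg _
  have hrt : |1 - r| ≤ t := by
    have := abs_pnorm_sub_le (jn (eLast n) (0 : E m)) y
    rwa [pnorm_e] at this
  have hyt : ‖y‖ ≤ 1 + t := by
    have := norm_sub_norm_le y (jn (eLast n) (0 : E m))
    rw [norm_e, norm_sub_rev] at this
    linarith
  rw [← ENNReal.ofReal_mul (by positivity)]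
  by_cases h : t < 1 / 2
  · rw [indicator_of_mem (by exact h), ← ENNReal.ofReal_mul (by positivity)]
    refine le_add_right (ENNReal.ofReal_le_ofReal ?_)
    rw [min_eq_right (by linarith)]
    have h1 := abs_le.1 hrt
    have hrδ : r ^ δ ≤ 2 ^ |δ| := rpow_le_of_near (by linarith) (by linarith)
    have ht2 : t ^ (-((n + 1 + m : ℕ) : ℝ) - σ) * t ^ p ≤ t ^ (p - σ - (n + 1 + m : ℕ)) := by
      rcases ht0.eq_or_lt with h0 | h0
      · rw [← h0, Real.zero_rpow (x := p) (by linarith), mul_zero]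
        positivity
      · rw [← Real.rpow_add h0]
        apply le_of_eq; congr 1; ring
    calc _ = r ^ δ * (t ^ (-((n + 1 + m : ℕ) : ℝ) - σ) * t ^ p) := by ring
      _ ≤ _ := by gcongr
  · push Not at h
    refine le_add_left ?_
    rw [← ENNReal.ofReal_mul (by positivity)]
    refine ENNReal.ofReal_le_ofReal ?_
    have hm1 : min 1 t ^ p ≤ 1 :=
      Real.rpow_le_one (le_min zero_le_one ht0) (min_le_left _ _) (by linarith)
    have h2 : t ^ (-((n + 1 + m : ℕ) : ℝ) - σ) ≤ 13 ^ q * (1 + ‖y‖ ^ 2) ^ (-q) := by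
      have e1 : t ^ (-((n + 1 + m : ℕ) : ℝ) - σ) = (t ^ 2) ^ (-q) := by
        rw [← Real.rpow_natCast, ← Real.rpow_mul ht0]
        congr 1; rw [hq]; push_cast; ring
      have e2 : (13 : ℝ) ^ q * (1 + ‖y‖ ^ 2) ^ (-q) = ((1 + ‖y‖ ^ 2) / 13) ^ (-q) := by
        rw [Real.div_rpow (by positivity) (by norm_num), Real.rpow_neg (x := 13) (by norm_num),
          div_inv_eq_mul, mul_comm]
      rw [e1, e2]
      refine Real.rpow_le_rpow_of_nonpos (by positivity) ?_ (by linarith)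
      nlinarith [norm_nonneg y]
    calc _ ≤ t ^ (-((n + 1 + m : ℕ) : ℝ) - σ) * (r ^ δ * 1) := by gcongr
      _ ≤ 13 ^ q * (1 + ‖y‖ ^ 2) ^ (-q) * (r ^ δ * 1) := by gcongr
      _ = _ := by ring

end FracHardy

namespace FracHardy

/-! ### The ground state and the sharp constant -/

/-- The exponent `γ = (k + α + β - sp) / p`, `k = n + 1`: the function `|x_k|^{-γ}` is the virtual
ground state of the Hardy inequality. -/
def gam (n : ℕ) (s p α β : ℝ) : ℝ := (((n + 1 : ℕ) : ℝ) + α + β - s * p) / p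

/-- The admissible parameters, for codimension `k = n + 1`. -/
structure Adm (n : ℕ) (s p α β : ℝ) : Prop where
  hp : 1 ≤ p
  hs0 : 0 < s
  hs1 : s < 1
  hα : α ∈ Ioo (-((n + 1 : ℕ) : ℝ)) (s * p)
  hβ : β ∈ Ioo (-((n + 1 : ℕ) : ℝ)) (s * p)
  hαβ : α + β ∈ Ioo (-((n + 1 : ℕ) : ℝ)) (s * p)
  hne : s * p ≠ ((n + 1 : ℕ) : ℝ) + α + β

variable {n m : ℕ} {s p α β : ℝ}

lemma gam_comm : gam n s p β α = gam n s p α β := by unfold gam; ring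

namespace Adm

lemma symm (h : Adm n s p α β) : Adm n s p β α :=
  ⟨h.hp, h.hs0, h.hs1, h.hβ, h.hα, by rw [add_comm β α]; exact h.hαβ, by
    have := h.hne
    rwa [add_right_comm]⟩

lemma p_pos (h : Adm n s p α β) : 0 < p := by linarith [h.hp]

lemma σ_pos (h : Adm n s p α β) : 0 < s * p := mul_pos h.hs0 h.p_pos

lemma σ_lt (h : Adm n s p α β) : s * p < p := by nlinarith [h.hs1, h.p_pos]

lemma gam_mul (h : Adm n s p α β) : gam n s p α β * p = ((n + 1 : ℕ) : ℝ) + α + β - s * p := by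
  unfold gam
  rw [div_mul_cancel₀ _ h.p_pos.ne']

lemma fin_β (h : Adm n s p α β) :
    JJ n m (s * p) (fun r t => ENNReal.ofReal (r ^ β * min 1 t ^ p)) < ⊤ :=
  JJ_lt_top h.σ_pos h.σ_lt h.hβ.1 h.hβ.2

lemma fin_β' (h : Adm n s p α β) :
    JJ n m (s * p) (fun r t => ENNReal.ofReal (r ^ (β - gam n s p α β * p) * min 1 t ^ p)) < ⊤ := by
  have := h.hα
  rw [h.gam_mul]
  exact JJ_lt_top h.σ_pos h.σ_lt (by linarith [this.2]) (by linarith [this.1])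

/-- Any function dominated by `min(1, |e-y|)^p (1 + |y_k|^{-γp})` has a finite weighted model
integral. -/
lemma JJ_fin (h : Adm n s p α β) (C : ℝ) (hC : 0 ≤ C) (g : ℝ → ℝ → ENNReal)
    (hg : ∀ r t, 0 < r → 0 ≤ t → |r - 1| ≤ t →
      g r t ≤ ENNReal.ofReal (C * min 1 t ^ p * (1 + r ^ (-gam n s p α β * p)))) :
    JJ n m (s * p) (fun r t => ENNReal.ofReal (r ^ β) * g r t) < ⊤ := by
  have h1 : JJ n m (s * p) (fun r t => ENNReal.ofReal C * (ENNReal.ofReal (r ^ β * min 1 t ^ p) +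
      ENNReal.ofReal (r ^ (β - gam n s p α β * p) * min 1 t ^ p))) < ⊤ := by
    rw [JJ_const_mul _ ENNReal.ofReal_ne_top, JJ_add (by simp only [Function.uncurry_def]; fun_prop)]
    exact ENNReal.mul_lt_top ENNReal.ofReal_lt_top (ENNReal.add_lt_top.2 ⟨h.fin_β, h.fin_β'⟩)
  refine lt_of_le_of_lt (JJ_mono fun r t hr ht hrt => ?_) h1
  have hm : 0 ≤ min 1 t := le_min zero_le_one ht
  calc _ ≤ ENNReal.ofReal (r ^ β) *
        ENNReal.ofReal (C * min 1 t ^ p * (1 + r ^ (-gam n s p α β * p))) := by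
        gcongr; exact hg r t hr ht hrt
    _ = _ := by
        rw [← ENNReal.ofReal_mul (by positivity), ← ENNReal.ofReal_add (by positivity) (by positivity),
          ← ENNReal.ofReal_mul hC]
        congr 1
        have : r ^ (β - gam n s p α β * p) = r ^ β * r ^ (-gam n s p α β * p) := by
          rw [← Real.rpow_add hr]; congr 1; ring
        rw [this]; ring

end Adm

/-- `log` is Lipschitz near `1`, with truncation away from `1`. -/
lemma min_log_le {r t : ℝ} (hr : 0 < r) (ht : |r - 1| ≤ t) :
    min 1 |Real.log r| ≤ 2 * min 1 t := by
  by_cases h : t < 1 / 2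
  · have h1 := abs_le.1 ht
    have h2 := Real.log_le_sub_one_of_pos hr
    have h3 := Real.log_le_sub_one_of_pos (inv_pos.2 hr)
    rw [Real.log_inv] at h3
    have h4 : r⁻¹ ≤ 2 := by
      rw [inv_le_comm₀ hr (by norm_num)]; linarith
    have h5 : r⁻¹ - 1 ≤ 2 * t := by
      have : r⁻¹ - 1 = r⁻¹ * (1 - r) := by field_simp
      rw [this]
      have := inv_pos.2 hr
      nlinarith
    rw [min_eq_right (a := 1) (b := t) (by linarith)]
    refine (min_le_right _ _).trans (abs_le.2 ⟨by linarith, by linarith⟩)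
  · push Not at h
    refine (min_le_left _ _).trans ?_
    have : 1 / 2 ≤ min 1 t := le_min (by norm_num) h
    linarith

lemma one_add_rpow_le {x p : ℝ} (hx : 0 ≤ x) (hp : 0 ≤ p) :
    (1 + x) ^ p ≤ 2 ^ p * (1 + x ^ p) := by
  rcases le_total x 1 with h | h
  · calc (1 + x) ^ p ≤ 2 ^ p := Real.rpow_le_rpow (by positivity) (by linarith) hp
      _ ≤ 2 ^ p * (1 + x ^ p) := le_mul_of_one_le_right (by positivity) (by
        have := Real.rpow_nonneg hx p
        linarith)
  · calc (1 + x) ^ p ≤ (2 * x) ^ p := Real.rpow_le_rpow (by positivity) (by linarith) hp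
      _ = 2 ^ p * x ^ p := Real.mul_rpow (by norm_num) hx
      _ ≤ 2 ^ p * (1 + x ^ p) := by gcongr; linarith

/-- `r ↦ r^c` is Lipschitz near `1`, with a bound by its growth away from `1`. -/
lemma one_sub_rpow_le (c : ℝ) : ∃ C, 0 ≤ C ∧ ∀ r t : ℝ, 0 < r → 0 ≤ t → |r - 1| ≤ t →
    |1 - r ^ c| ≤ C * min 1 t * (1 + r ^ c) := by
  refine ⟨max 2 (|c| * 2 ^ |c - 1|), by positivity, fun r t hr ht hrt => ?_⟩
  have hrc : 0 < r ^ c := by positivity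
  by_cases h : t < 1 / 2
  · rw [min_eq_right (by linarith)]
    have h1 := abs_le.1 hrt
    have hd : ∀ x ∈ Icc (1 / 2 : ℝ) 2, HasDerivWithinAt (fun x => x ^ c) (c * x ^ (c - 1))
        (Icc (1 / 2) 2) x := fun x hx =>
      (Real.hasDerivAt_rpow_const (Or.inl (by linarith [hx.1]))).hasDerivWithinAt
    have hb : ∀ x ∈ Icc (1 / 2 : ℝ) 2, ‖c * x ^ (c - 1)‖ ≤ |c| * 2 ^ |c - 1| := by
      intro x hx
      have hx0 : 0 < x := by linarith [hx.1]
      rw [norm_mul, Real.norm_eq_abs, Real.norm_of_nonneg (by positivity)]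
      gcongr
      exact rpow_le_of_near hx.1 hx.2
    have := (convex_Icc (1 / 2 : ℝ) 2).norm_image_sub_le_of_norm_hasDerivWithin_le hd hb
      (x := r) (y := 1) ⟨by linarith, by linarith⟩ ⟨by norm_num, by norm_num⟩
    simp only [Real.one_rpow, Real.norm_eq_abs] at this
    rw [abs_sub_comm 1 r] at this
    calc _ ≤ |c| * 2 ^ |c - 1| * |r - 1| := this
      _ ≤ max 2 (|c| * 2 ^ |c - 1|) * t := by gcongr; exact le_max_right _ _
      _ ≤ _ := le_mul_of_one_le_right (by positivity) (by linarith)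
  · push Not at h
    have h2 : 1 / 2 ≤ min 1 t := le_min (by norm_num) h
    have h3 : 1 ≤ max 2 (|c| * 2 ^ |c - 1|) * min 1 t := by
      have := le_max_left 2 (|c| * 2 ^ |c - 1|)
      nlinarith
    calc |1 - r ^ c| ≤ 1 * (1 + r ^ c) := by
          rw [abs_le]; constructor <;> linarith
      _ ≤ _ := by gcongr

/-- Finiteness of the sharp constant, as a model integral. -/
lemma Adm.JJ_ground_lt_top (h : Adm n s p α β) :
    JJ n m (s * p) (fun r _ => ENNReal.ofReal (r ^ β) *
      ENNReal.ofReal (|1 - r ^ (-gam n s p α β)| ^ p)) < ⊤ := by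
  obtain ⟨C, hC, H⟩ := one_sub_rpow_le (-gam n s p α β)
  have hp := h.p_pos
  refine h.JJ_fin (C ^ p * 2 ^ p) (by positivity) (fun r _ =>
    ENNReal.ofReal (|1 - r ^ (-gam n s p α β)| ^ p)) fun r t hr ht hrt => ?_
  refine ENNReal.ofReal_le_ofReal ?_
  have hm : 0 ≤ min 1 t := le_min zero_le_one ht
  calc |1 - r ^ (-gam n s p α β)| ^ p ≤ (C * min 1 t * (1 + r ^ (-gam n s p α β))) ^ p :=
        Real.rpow_le_rpow (abs_nonneg _) (H r t hr ht hrt) hp.le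
    _ = C ^ p * min 1 t ^ p * (1 + r ^ (-gam n s p α β)) ^ p := by
        rw [Real.mul_rpow (by positivity) (by positivity), Real.mul_rpow hC hm]
    _ ≤ C ^ p * min 1 t ^ p * (2 ^ p * (1 + (r ^ (-gam n s p α β)) ^ p)) := by
        gcongr
        exact one_add_rpow_le (by positivity) hp.le
    _ = _ := by rw [← Real.rpow_mul hr.le]; ring

lemma Phi_nonneg (d : ℕ) (s p : ℝ) {r : ℝ} (hr : r ∈ Ioo (0 : ℝ) 1) : 0 ≤ Phi d s p r := by
  have h1 : 0 < 1 - r := by linarith [hr.2]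
  have h0 := hr.1
  unfold Phi
  split_ifs
  · positivity
  · refine mul_nonneg ?_ (setIntegral_nonneg measurableSet_Icc fun t ht => ?_)
    · unfold sphereVol
      have := Real.Gamma_pos_of_pos (show (0 : ℝ) < (((d - 2 : ℕ) : ℝ) + 1) / 2 by positivity)
      have := Real.pi_pos
      positivity
    · have h1 : 0 ≤ 1 - t ^ 2 := by nlinarith [ht.1, ht.2]
      have h2 := (sq_nonneg _).trans (one_sub_sq_le t r ht.2 hr.1.le)
      positivity

/-- The sharp constant is the model integral of `|y_k|^β |1 - |y_k|^{-γ}|^p`. -/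
lemma Adm.JJ_ground (h : Adm n s p α β) :
    JJ n m (s * p) (fun r _ => ENNReal.ofReal (r ^ β) *
      ENNReal.ofReal (|1 - r ^ (-gam n s p α β)| ^ p)) =
    ENNReal.ofReal (CC (n + 1 + m) (n + 1) s p α β) := by
  have hfin := h.JJ_ground_lt_top (m := m)
  have hσ := h.σ_pos
  have hA := Amar_pos (n := n) (m := m) hσ
  have hp := h.p_pos
  rw [JJ_polar n m s p hσ (fun r => ENNReal.ofReal (r ^ β) *
    ENNReal.ofReal (|1 - r ^ (-gam n s p α β)| ^ p)) (by fun_prop)] at hfin ⊢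
  set γ := gam n s p α β with hγ
  set F : ℝ → ℝ := fun r => r ^ (s * p - 1) * (r ^ (-α) + r ^ (-β)) *
      |1 - r ^ ((((n + 1 : ℕ) : ℝ) + α + β - s * p) / p)| ^ p * Phi (n + 1) s p r with hF
  have hF0 : ∀ r ∈ Ioo (0 : ℝ) 1, 0 ≤ F r := by
    intro r hr
    have := Phi_nonneg (n + 1) s p hr
    have := hr.1
    positivity
  have hFe : ∫⁻ r in Ioo (0 : ℝ) 1, ENNReal.ofReal (Phi (n + 1) s p r) *
        (ENNReal.ofReal (r ^ (n : ℝ)) * (ENNReal.ofReal (r ^ β) *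
          ENNReal.ofReal (|1 - r ^ (-γ)| ^ p)) + ENNReal.ofReal (r ^ (s * p - 1)) *
          (ENNReal.ofReal (r⁻¹ ^ β) * ENNReal.ofReal (|1 - r⁻¹ ^ (-γ)| ^ p))) =
      ∫⁻ r in Ioo (0 : ℝ) 1, ENNReal.ofReal (F r) := by
    refine setLIntegral_congr_fun measurableSet_Ioo fun r hr => ?_
    have hr0 := hr.1
    have hP := Phi_nonneg (n + 1) s p hr
    simp only [hF]
    rw [← ENNReal.ofReal_mul (by positivity), ← ENNReal.ofReal_mul (by positivity),
      ← ENNReal.ofReal_mul (by positivity), ← ENNReal.ofReal_mul (by positivity),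
      ← ENNReal.ofReal_add (by positivity) (by positivity), ← ENNReal.ofReal_mul hP]
    congr 1
    have e0 : (((n + 1 : ℕ) : ℝ) + α + β - s * p) / p = γ := rfl
    have e1 : r⁻¹ ^ (-γ) = r ^ γ := by
      rw [Real.inv_rpow hr0.le, ← Real.rpow_neg hr0.le, neg_neg]
    have e2 : r⁻¹ ^ β = r ^ (-β) := by
      rw [Real.inv_rpow hr0.le, ← Real.rpow_neg hr0.le]
    have e3 : |1 - r ^ (-γ)| = r ^ (-γ) * |1 - r ^ γ| := by
      rw [← abs_of_pos (Real.rpow_pos_of_pos hr0 (-γ)), ← abs_mul, mul_sub,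
        abs_of_pos (Real.rpow_pos_of_pos hr0 (-γ)), ← Real.rpow_add hr0, neg_add_cancel,
        Real.rpow_zero, mul_one, abs_sub_comm]
    have e4 : r ^ (n : ℝ) * r ^ β * (r ^ (-γ)) ^ p = r ^ (s * p - 1) * r ^ (-α) := by
      rw [← Real.rpow_mul hr0.le, ← Real.rpow_add hr0, ← Real.rpow_add hr0, ← Real.rpow_add hr0,
        neg_mul, h.gam_mul]
      congr 1; push_cast; ring
    rw [e0, e1, e2, e3, Real.mul_rpow (by positivity) (by positivity)]
    linear_combination Phi (n + 1) s p r * |1 - r ^ γ| ^ p * e4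
  rw [hFe] at hfin ⊢
  have hC1 : C1 (n + 1) s p α β = ∫ r in Ioo (0 : ℝ) 1, F r := rfl
  have hfin2 : ∫⁻ r in Ioo (0 : ℝ) 1, ENNReal.ofReal (F r) ≠ ⊤ := by
    intro hcon
    rw [hcon, ENNReal.mul_top (by simpa using hA)] at hfin
    exact lt_irrefl _ hfin
  obtain ⟨Q, hQm, -, hQ1, -⟩ := polar n s p hσ
  have hm : AEStronglyMeasurable F (volume.restrict (Ioo 0 1)) := by
    have : Measurable fun r : ℝ => r ^ (s * p - 1) * (r ^ (-α) + r ^ (-β)) *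
      |1 - r ^ ((((n + 1 : ℕ) : ℝ) + α + β - s * p) / p)| ^ p * (Q r).toReal := by fun_prop
    refine this.aestronglyMeasurable.congr ?_
    filter_upwards [ae_restrict_mem measurableSet_Ioo] with r hr
    simp only [hF]
    rw [hQ1 r hr, ENNReal.toReal_ofReal (Phi_nonneg _ s p hr)]
  rw [CC, hC1, integral_eq_lintegral_of_nonneg_ae
    ((ae_restrict_mem measurableSet_Ioo).mono fun r hr => hF0 r hr) hm]
  have hA2 : Real.pi ^ ((((n + 1 + m : ℕ) : ℝ) - ((n + 1 : ℕ) : ℝ)) / 2) *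
      Real.Gamma ((((n + 1 : ℕ) : ℝ) + s * p) / 2) /
      Real.Gamma ((((n + 1 + m : ℕ) : ℝ) + s * p) / 2) = Amar n m (s * p) := by
    unfold Amar
    congr 3; push_cast; ring
  rw [hA2, ENNReal.ofReal_mul hA.le, ENNReal.ofReal_toReal hfin2]

lemma Adm.CC_nonneg (h : Adm n s p α β) : 0 ≤ CC (n + 1 + m) (n + 1) s p α β := by
  unfold CC
  have := Real.Gamma_pos_of_pos (show (0 : ℝ) < (((n + 1 : ℕ) : ℝ) + s * p) / 2 by
    have := h.σ_pos; positivity)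
  have := Real.Gamma_pos_of_pos (show (0 : ℝ) < (((n + 1 + m : ℕ) : ℝ) + s * p) / 2 by
    have := h.σ_pos; positivity)
  have := Real.pi_pos
  refine mul_nonneg (by positivity) (setIntegral_nonneg measurableSet_Ioo fun r hr => ?_)
  have := Phi_nonneg (n + 1) s p hr
  have := hr.1
  positivity

end FracHardy

namespace FracHardy

/-! ### Pointwise convexity inequalities -/

/-- Convexity of `x ↦ x^p` applied to `X + Y = (1-t) (X / (1-t)) + t (Y / t)`; it underlies both
bounds. -/
lemma conv_ineq {p t X Y : ℝ} (hp : 1 ≤ p) (h0 : 0 < t) (h1 : t < 1) (hX : 0 ≤ X) (hY : 0 ≤ Y) :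
    (X + Y) ^ p ≤ (1 - t) ^ (1 - p) * X ^ p + t ^ (1 - p) * Y ^ p := by
  have h2 : 0 < 1 - t := by linarith
  have h := (convexOn_rpow hp).2 (x := X / (1 - t)) (y := Y / t) (div_nonneg hX h2.le)
    (div_nonneg hY h0.le) h2.le h0.le (by ring)
  simp only [smul_eq_mul] at h
  rw [mul_div_cancel₀ _ h2.ne', mul_div_cancel₀ _ h0.ne', Real.div_rpow hX h2.le,
    Real.div_rpow hY h0.le] at h
  refine h.trans (le_of_eq ?_)
  rw [Real.rpow_sub h2, Real.rpow_sub h0, Real.rpow_one, Real.rpow_one]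
  ring

/-- The positive part `(1 - t)₊^{p-1}`, vanishing at `t = 1`. -/
def fpos (p t : ℝ) : ℝ := if t < 1 then (1 - t) ^ (p - 1) else 0

/-- The negative part `(t - 1)₊^{p-1}`, vanishing at `t = 1`. -/
def fneg (p t : ℝ) : ℝ := if 1 < t then (t - 1) ^ (p - 1) else 0

@[fun_prop]
lemma measurable_fpos (p : ℝ) : Measurable (fpos p) :=
  Measurable.ite measurableSet_Iio (by fun_prop) measurable_const

@[fun_prop]
lemma measurable_fneg (p : ℝ) : Measurable (fneg p) :=
  Measurable.ite measurableSet_Ioi (by fun_prop) measurable_const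

lemma fpos_nonneg (p t : ℝ) : 0 ≤ fpos p t := by
  unfold fpos
  split_ifs with h
  · exact Real.rpow_nonneg (by linarith) _
  · exact le_rfl

lemma fneg_nonneg (p t : ℝ) : 0 ≤ fneg p t := by
  unfold fneg
  split_ifs with h
  · exact Real.rpow_nonneg (by linarith) _
  · exact le_rfl

/-- The case `t < 1` of `point_ineq`. -/
lemma conv_lt {p t a b : ℝ} (hp : 1 ≤ p) (h0 : 0 < t) (h1 : t < 1) :
    (1 - t) ^ (p - 1) * |a| ^ p ≤ |a - b| ^ p + (t⁻¹ - 1) ^ (p - 1) * |b| ^ p := by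
  have h2 : 0 < 1 - t := by linarith
  have hab : |a| ≤ |a - b| + |b| := by
    have := abs_add_le (a - b) b
    rwa [sub_add_cancel] at this
  have h := conv_ineq hp h0 h1 (abs_nonneg (a - b)) (abs_nonneg b)
  have h3 := (Real.rpow_le_rpow (abs_nonneg a) hab (by linarith : 0 ≤ p)).trans h
  have e1 : (1 - t) ^ (p - 1) * (1 - t) ^ (1 - p) = 1 := by
    rw [← Real.rpow_add h2]; simp
  have e2 : (t⁻¹ - 1) ^ (p - 1) = (1 - t) ^ (p - 1) * t ^ (1 - p) := by
    have : t⁻¹ - 1 = (1 - t) * t⁻¹ := by field_simp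
    rw [this, Real.mul_rpow h2.le (by positivity), Real.inv_rpow h0.le, ← Real.rpow_neg h0.le,
      neg_sub]
  calc _ ≤ (1 - t) ^ (p - 1) *
        ((1 - t) ^ (1 - p) * |a - b| ^ p + t ^ (1 - p) * |b| ^ p) := by gcongr
    _ = _ := by rw [e2]; linear_combination |a - b| ^ p * e1

/-- The ground state inequality with all terms arranged to be nonnegative;
`t` stands for the quotient `w(y) / w(x)` of the values of the ground state. -/
lemma point_ineq {p t a b : ℝ} (hp : 1 ≤ p) (h0 : 0 < t) :
    fpos p t * |a| ^ p + fpos p t⁻¹ * |b| ^ p ≤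
      |a - b| ^ p + (fneg p t⁻¹ * |b| ^ p + fneg p t * |a| ^ p) := by
  unfold fpos fneg
  have hpow : 0 ≤ |a - b| ^ p := by positivity
  rcases lt_trichotomy t 1 with h | h | h
  · have hi : 1 < t⁻¹ := (one_lt_inv₀ h0).2 h
    rw [if_pos h, if_neg hi.not_gt, if_pos hi, if_neg h.not_gt]
    have := conv_lt (a := a) (b := b) hp h0 h
    linarith
  · subst h
    simpa using hpow
  · have hi : t⁻¹ < 1 := inv_lt_one_of_one_lt₀ h
    rw [if_neg h.not_gt, if_pos hi, if_neg hi.not_gt, if_pos h]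
    have := conv_lt (a := b) (b := a) hp (inv_pos.2 h0) hi
    rw [inv_inv, abs_sub_comm] at this
    linarith

/-- The identity by which, after inversion, the four terms of `point_ineq` combine to `|1 - t|^p`. -/
lemma fpos_fneg_eq {p t : ℝ} (hp : 1 ≤ p) (h0 : 0 < t) :
    fpos p t + t ^ p * fpos p t⁻¹ = |1 - t| ^ p + (fneg p t + t ^ p * fneg p t⁻¹) := by
  unfold fpos fneg
  have key : ∀ x : ℝ, 0 < x → x ^ p = x ^ (p - 1) * x := by
    intro x hx
    nth_rw 3 [← Real.rpow_one x]
    rw [← Real.rpow_add hx]; congr 1; ring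
  have e1 : t ^ p = t * t ^ (p - 1) := by rw [key t h0]; ring
  rcases lt_trichotomy t 1 with h | h | h
  · have hi : 1 < t⁻¹ := (one_lt_inv₀ h0).2 h
    have h2 : 0 < 1 - t := by linarith
    rw [if_pos h, if_neg hi.not_gt, if_neg h.not_gt, if_pos hi, abs_of_pos h2, e1]
    have e2 : t ^ (p - 1) * (t⁻¹ - 1) ^ (p - 1) = (1 - t) ^ (p - 1) := by
      rw [← Real.mul_rpow h0.le (by linarith)]
      congr 1; field_simp
    rw [key _ h2]
    linear_combination (-t) * e2
  · subst h
    simp [Real.zero_rpow (by linarith : p ≠ 0)]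
  · have hi : t⁻¹ < 1 := inv_lt_one_of_one_lt₀ h
    have h2 : 0 < t - 1 := by linarith
    rw [if_neg h.not_gt, if_pos hi, if_pos h, if_neg hi.not_gt, abs_sub_comm, abs_of_pos h2, e1]
    have e2 : t ^ (p - 1) * (1 - t⁻¹) ^ (p - 1) = (t - 1) ^ (p - 1) := by
      rw [← Real.mul_rpow h0.le (by linarith)]
      congr 1; field_simp
    rw [key _ h2]
    linear_combination t * e2

lemma fneg_le {p t : ℝ} (hp : 1 ≤ p) (h0 : 0 < t) : fneg p t ≤ 1 + t ^ p := by
  have hpow : 0 < t ^ p := by positivity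
  unfold fneg
  split_ifs with h
  · calc (t - 1) ^ (p - 1) ≤ t ^ (p - 1) :=
        Real.rpow_le_rpow (by linarith) (by linarith) (by linarith)
      _ ≤ t ^ p := Real.rpow_le_rpow_of_exponent_le h.le (by linarith)
      _ ≤ _ := by linarith
  · linarith

/-! ### Energy and Hardy functionals -/

/-- The kernel `|x - y|^{-d-σ} |x_k|^a |y_k|^b`. -/
def Ker (n m : ℕ) (σ a b : ℝ) (x y : E (n + 1 + m)) : ENNReal :=
  ENNReal.ofReal (‖x - y‖ ^ (-((n + 1 + m : ℕ) : ℝ) - σ) *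
    pnorm (n + 1 + m) (n + 1) x ^ a * pnorm (n + 1 + m) (n + 1) y ^ b)

/-- The weighted Gagliardo energy. -/
def En (n m : ℕ) (s p α β : ℝ) (u : E (n + 1 + m) → ℝ) : ENNReal :=
  ∫⁻ x, ∫⁻ y, ENNReal.ofReal (|u x - u y| ^ p) * Ker n m (s * p) α β x y

/-- The weighted integral `∫ v(x) |x_k|^a dx`. -/
def Wt (n m : ℕ) (a : ℝ) (v : E (n + 1 + m) → ENNReal) : ENNReal :=
  ∫⁻ x, v x * ENNReal.ofReal (pnorm (n + 1 + m) (n + 1) x ^ a)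

variable {n m : ℕ} {s p α β σ a b : ℝ}

lemma Ker_comm (x y : E (n + 1 + m)) : Ker n m σ a b x y = Ker n m σ b a y x := by
  unfold Ker
  rw [norm_sub_rev]; congr 1; ring

lemma measurable_Ker : Measurable (Function.uncurry (Ker n m σ a b)) := by
  simp only [Function.uncurry_def, Ker]
  fun_prop

/-- Integrating out `y`, by scaling. -/
lemma lintegral_fixX (v : E (n + 1 + m) → ENNReal) (g : ℝ → ℝ → ENNReal)
    (hv : Measurable v) (hg : Measurable (Function.uncurry g)) :
    ∫⁻ x, ∫⁻ y, v x * Ker n m σ a b x y * g (pnorm (n + 1 + m) (n + 1) y /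
      pnorm (n + 1 + m) (n + 1) x) (‖x - y‖ / pnorm (n + 1 + m) (n + 1) x) =
    Wt n m (a + b - σ) v * JJ n m σ (fun r t => ENNReal.ofReal (r ^ b) * g r t) := by
  unfold Wt
  rw [← lintegral_mul_const _ (by fun_prop)]
  refine lintegral_congr_ae ?_
  filter_upwards [ae_pnorm_pos (k := n + 1) (m := m) (by omega)] with x hx
  have h := lintegral_kernel (σ := σ) x hx b g hg
  set ν := pnorm (n + 1 + m) (n + 1) x with hν
  have e1 : ENNReal.ofReal (ν ^ (a + b - σ)) = ENNReal.ofReal (ν ^ a) *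
      ENNReal.ofReal (ν ^ (b - σ)) := by
    rw [← ENNReal.ofReal_mul (by positivity), ← Real.rpow_add hx]; congr 2; ring
  rw [e1, mul_assoc, mul_assoc, ← h, ← lintegral_const_mul' _ _ ENNReal.ofReal_ne_top,
    ← lintegral_const_mul]
  · refine lintegral_congr fun y => ?_
    have hy := pnorm_nonneg (n + 1 + m) (n + 1) y
    unfold Ker
    rw [← mul_assoc (ENNReal.ofReal (ν ^ a)), ← ENNReal.ofReal_mul (by positivity), mul_assoc (v x),
      ← hν]
    congr 3; ring
  · have : Measurable fun y : E (n + 1 + m) => g (pnorm (n + 1 + m) (n + 1) y / ν) (‖x - y‖ / ν) :=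
      hg.comp (Measurable.prodMk (by fun_prop) (by fun_prop))
    fun_prop

/-- Integrating out `x`, by symmetry. -/
lemma lintegral_fixY (v : E (n + 1 + m) → ENNReal) (g : ℝ → ℝ → ENNReal)
    (hv : Measurable v) (hg : Measurable (Function.uncurry g)) :
    ∫⁻ x, ∫⁻ y, v y * Ker n m σ a b x y * g (pnorm (n + 1 + m) (n + 1) x /
      pnorm (n + 1 + m) (n + 1) y) (‖x - y‖ / pnorm (n + 1 + m) (n + 1) y) =
    Wt n m (a + b - σ) v * JJ n m σ (fun r t => ENNReal.ofReal (r ^ a) * g r t) := by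
  have hm : Measurable (Function.uncurry fun x y : E (n + 1 + m) =>
      v y * Ker n m σ a b x y * g (pnorm (n + 1 + m) (n + 1) x /
      pnorm (n + 1 + m) (n + 1) y) (‖x - y‖ / pnorm (n + 1 + m) (n + 1) y)) := by
    have : Measurable fun q : E (n + 1 + m) × E (n + 1 + m) => g (pnorm (n + 1 + m) (n + 1) q.1 /
      pnorm (n + 1 + m) (n + 1) q.2) (‖q.1 - q.2‖ / pnorm (n + 1 + m) (n + 1) q.2) :=
      hg.comp (Measurable.prodMk (by fun_prop) (by fun_prop))
    exact ((hv.comp measurable_snd).mul measurable_Ker).mul this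
  rw [lintegral_lintegral_swap hm.aemeasurable, add_comm a b, ← lintegral_fixX v g hv hg]
  refine lintegral_congr fun y => lintegral_congr fun x => ?_
  rw [Ker_comm, norm_sub_rev]

/-- Truncation to `|log r| > ε`. -/
def cut (ε r : ℝ) (z : ENNReal) : ENNReal := {r : ℝ | ε < |Real.log r|}.indicator (fun _ => z) r

lemma cut_le (ε r : ℝ) (z : ENNReal) : cut ε r z ≤ z := indicator_apply_le fun _ => le_rfl

lemma cut_inv (ε r : ℝ) (z : ENNReal) : cut ε r⁻¹ z = cut ε r z := by
  unfold cut indicator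
  simp

lemma measurable_cut (ε : ℝ) (f : ℝ → ENNReal) (hf : Measurable f) :
    Measurable fun r => cut ε r (f r) := by
  have : (fun r => cut ε r (f r)) = {r : ℝ | ε < |Real.log r|}.indicator f := by
    ext r; simp [cut, indicator]
  rw [this]
  exact hf.indicator (measurableSet_lt measurable_const (by fun_prop))

lemma cut_add (ε r : ℝ) (z w : ENNReal) : cut ε r (z + w) = cut ε r z + cut ε r w := by
  unfold cut indicator
  split_ifs <;> simp

lemma cut_mul (ε r : ℝ) (z w : ENNReal) : cut ε r (z * w) = z * cut ε r w := by
  unfold cut indicator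
  split_ifs <;> simp

/-- The negative terms have finite model integrals away from `r = 1`. Near `r = 1` the integrand may
behave like `|1 - r|^(p-2-sp)`, which is not integrable when `p - 1 ≤ sp`. -/
lemma Adm.cut_fin (h : Adm n s p α β) {ε : ℝ} (hε : 0 < ε) :
    JJ n m (s * p) (fun r _ => ENNReal.ofReal (r ^ β) *
      cut ε r (ENNReal.ofReal (fneg p (r ^ (-gam n s p α β))))) < ⊤ := by
  have hp := h.p_pos
  refine h.JJ_fin ((2 / min 1 ε) ^ p) (by positivity)
    (fun r _ => cut ε r (ENNReal.ofReal (fneg p (r ^ (-gam n s p α β))))) fun r t hr ht hrt => ?_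
  unfold cut
  refine indicator_apply_le' (fun hm => ENNReal.ofReal_le_ofReal ?_) fun _ => zero_le
  have hm : ε < |Real.log r| := hm
  have h1 : min 1 ε ≤ 2 * min 1 t := (min_le_min le_rfl hm.le).trans (min_log_le hr hrt)
  have hme : 0 < min 1 ε := lt_min one_pos hε
  have hmt : 0 ≤ min 1 t := le_min zero_le_one ht
  have h2 : 1 ≤ (2 / min 1 ε) ^ p * min 1 t ^ p := by
    rw [← Real.mul_rpow (by positivity) hmt]
    refine Real.one_le_rpow ?_ hp.le
    rw [div_mul_eq_mul_div, one_le_div hme]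
    exact h1
  calc fneg p (r ^ (-gam n s p α β)) ≤ 1 + (r ^ (-gam n s p α β)) ^ p := fneg_le h.hp (by positivity)
    _ = 1 + r ^ (-gam n s p α β * p) := by rw [Real.rpow_mul hr.le]
    _ ≤ _ := le_mul_of_one_le_left (by positivity) h2

/-- Inversion of a truncated weighted model integral. -/
lemma Adm.JJ_inv_cut (h : Adm n s p α β) (ε : ℝ) (f : ℝ → ℝ) (hf : Measurable f) :
    JJ n m (s * p) (fun r _ => ENNReal.ofReal (r ^ α) *
      cut ε r (ENNReal.ofReal (f (r ^ (-gam n s p α β))))) =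
    JJ n m (s * p) (fun r _ => ENNReal.ofReal (r ^ β) * cut ε r
      (ENNReal.ofReal ((r ^ (-gam n s p α β)) ^ p) *
        ENNReal.ofReal (f (r ^ (-gam n s p α β))⁻¹))) := by
  rw [JJ_inv n m s p h.σ_pos (fun r => ENNReal.ofReal (r ^ α) *
      cut ε r (ENNReal.ofReal (f (r ^ (-gam n s p α β)))))
    (Measurable.mul (by fun_prop) (measurable_cut _ _ (by fun_prop)))]
  refine JJ_congr fun r t hr _ _ => ?_
  rw [cut_inv, cut_mul, Real.inv_rpow hr.le, Real.inv_rpow hr.le, ← mul_assoc, ← mul_assoc,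
    ← ENNReal.ofReal_mul (by positivity), ← ENNReal.ofReal_mul (by positivity)]
  congr 2
  rw [← Real.rpow_neg hr.le, ← Real.rpow_add hr, ← Real.rpow_mul hr.le, ← Real.rpow_add hr,
    neg_mul, h.gam_mul]
  congr 1; push_cast; ring

/-- The truncated model integrals of the terms of `point_ineq` differ by that of
`r^β |1 - r^(-γ)|^p`; the equation is arranged so that no infinite quantities are subtracted. -/
lemma Adm.JJ_cut_eq (h : Adm n s p α β) (ε : ℝ) :
    JJ n m (s * p) (fun r _ => ENNReal.ofReal (r ^ β) *
      cut ε r (ENNReal.ofReal (fpos p (r ^ (-gam n s p α β))))) +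
    JJ n m (s * p) (fun r _ => ENNReal.ofReal (r ^ α) *
      cut ε r (ENNReal.ofReal (fpos p (r ^ (-gam n s p α β))))) =
    JJ n m (s * p) (fun r _ => ENNReal.ofReal (r ^ β) *
      cut ε r (ENNReal.ofReal (|1 - r ^ (-gam n s p α β)| ^ p))) +
    (JJ n m (s * p) (fun r _ => ENNReal.ofReal (r ^ β) *
      cut ε r (ENNReal.ofReal (fneg p (r ^ (-gam n s p α β))))) +
    JJ n m (s * p) (fun r _ => ENNReal.ofReal (r ^ α) *
      cut ε r (ENNReal.ofReal (fneg p (r ^ (-gam n s p α β)))))) := by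
  have hm : ∀ f : ℝ → ENNReal, Measurable f → Measurable (Function.uncurry fun (r _ : ℝ) =>
      ENNReal.ofReal (r ^ β) * cut ε r (f r)) := fun f hf => by
    have := measurable_cut ε f hf
    simp only [Function.uncurry_def]
    exact Measurable.mul (by fun_prop) (this.comp measurable_fst)
  rw [h.JJ_inv_cut ε _ (measurable_fpos p), h.JJ_inv_cut ε _ (measurable_fneg p),
    ← JJ_add (hm _ (by fun_prop)), ← JJ_add (hm _ (by fun_prop)), ← JJ_add (hm _ (by fun_prop))]
  refine JJ_congr fun r t hr _ _ => ?_
  rw [← mul_add, ← mul_add, ← mul_add, ← cut_add, ← cut_add, ← cut_add]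
  have ht : 0 < r ^ (-gam n s p α β) := by positivity
  have := fpos_fneg_eq h.hp ht
  have h1 := fpos_nonneg p (r ^ (-gam n s p α β))
  have h2 := fpos_nonneg p (r ^ (-gam n s p α β))⁻¹
  have h3 := fneg_nonneg p (r ^ (-gam n s p α β))
  have h4 := fneg_nonneg p (r ^ (-gam n s p α β))⁻¹
  rw [← ENNReal.ofReal_mul (by positivity), ← ENNReal.ofReal_mul (by positivity),
    ← ENNReal.ofReal_add h1 (by positivity), ← ENNReal.ofReal_add h3 (by positivity),
    ← ENNReal.ofReal_add (by positivity) (by positivity), this]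

end FracHardy

namespace FracHardy

/-! ### The Hardy inequality -/

variable {n m : ℕ} {s p α β σ a b : ℝ}

lemma lintegral2_add {X : Type*} [MeasurableSpace X] {μ : Measure X} [SFinite μ]
    (f g : X → X → ENNReal) (hf : Measurable (Function.uncurry f)) :
    ∫⁻ x, ∫⁻ y, (f x y + g x y) ∂μ ∂μ = ∫⁻ x, ∫⁻ y, f x y ∂μ ∂μ + ∫⁻ x, ∫⁻ y, g x y ∂μ ∂μ := by
  rw [← lintegral_add_left hf.lintegral_prod_right]
  refine lintegral_congr fun x => ?_
  rw [lintegral_add_left hf.of_uncurry_left]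

lemma lintegral2_mono_pos {f g : E (n + 1 + m) → E (n + 1 + m) → ENNReal}
    (H : ∀ x y, 0 < pnorm (n + 1 + m) (n + 1) x → 0 < pnorm (n + 1 + m) (n + 1) y →
      f x y ≤ g x y) :
    ∫⁻ x, ∫⁻ y, f x y ≤ ∫⁻ x, ∫⁻ y, g x y := by
  refine lintegral_mono_ae ?_
  filter_upwards [ae_pnorm_pos (k := n + 1) (m := m) (by omega)] with x hx
  refine lintegral_mono_ae ?_
  filter_upwards [ae_pnorm_pos (k := n + 1) (m := m) (by omega)] with y hy
  exact H x y hx hy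

lemma measurable_fixX (v : E (n + 1 + m) → ENNReal) (g : ℝ → ℝ → ENNReal)
    (hv : Measurable v) (hg : Measurable (Function.uncurry g)) :
    Measurable (Function.uncurry fun x y => v x * Ker n m σ a b x y *
      g (pnorm (n + 1 + m) (n + 1) y / pnorm (n + 1 + m) (n + 1) x)
        (‖x - y‖ / pnorm (n + 1 + m) (n + 1) x)) := by
  have : Measurable fun q : E (n + 1 + m) × E (n + 1 + m) => g (pnorm (n + 1 + m) (n + 1) q.2 /
      pnorm (n + 1 + m) (n + 1) q.1) (‖q.1 - q.2‖ / pnorm (n + 1 + m) (n + 1) q.1) :=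
    hg.comp (Measurable.prodMk (by fun_prop) (by fun_prop))
  exact ((hv.comp measurable_fst).mul measurable_Ker).mul this

lemma measurable_cut2 (ε γ : ℝ) (f : ℝ → ℝ) (hf : Measurable f) :
    Measurable (Function.uncurry fun (r _ : ℝ) => cut ε r (ENNReal.ofReal (f (r ^ (-γ))))) :=
  (measurable_cut ε (fun r => ENNReal.ofReal (f (r ^ (-γ)))) (by fun_prop)).comp measurable_fst

/-- Integrated form of `point_ineq` away from `|x_k| = |y_k|`. -/
lemma Adm.lower_cut (h : Adm n s p α β) (u : E (n + 1 + m) → ℝ) (hu : Measurable u) (ε : ℝ) :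
    Wt n m (α + β - s * p) (fun x => ENNReal.ofReal (|u x| ^ p)) *
      (JJ n m (s * p) (fun r _ => ENNReal.ofReal (r ^ β) *
        cut ε r (ENNReal.ofReal (fpos p (r ^ (-gam n s p α β))))) +
      JJ n m (s * p) (fun r _ => ENNReal.ofReal (r ^ α) *
        cut ε r (ENNReal.ofReal (fpos p (r ^ (-gam n s p α β)))))) ≤
    En n m s p α β u + Wt n m (α + β - s * p) (fun x => ENNReal.ofReal (|u x| ^ p)) *
      (JJ n m (s * p) (fun r _ => ENNReal.ofReal (r ^ β) *
        cut ε r (ENNReal.ofReal (fneg p (r ^ (-gam n s p α β))))) +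
      JJ n m (s * p) (fun r _ => ENNReal.ofReal (r ^ α) *
        cut ε r (ENNReal.ofReal (fneg p (r ^ (-gam n s p α β)))))) := by
  set γ := gam n s p α β with hγ
  have hv : Measurable fun x => ENNReal.ofReal (|u x| ^ p) := by fun_prop
  have hm1 := measurable_cut2 ε γ (fpos p) (measurable_fpos p)
  have hm4 := measurable_cut2 ε γ (fneg p) (measurable_fneg p)
  rw [mul_add, mul_add, ← lintegral_fixX _ _ hv hm1, ← lintegral_fixY _ _ hv hm1,
    ← lintegral_fixX _ _ hv hm4, ← lintegral_fixY _ _ hv hm4, En,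
    ← lintegral2_add _ _ (measurable_fixX _ _ hv hm1),
    ← lintegral2_add _ _ (measurable_fixX _ _ hv hm4), ← lintegral2_add]
  · refine lintegral2_mono_pos fun x y hx hy => ?_
    set r := pnorm (n + 1 + m) (n + 1) y / pnorm (n + 1 + m) (n + 1) x with hr
    have hr0 : 0 < r := div_pos hy hx
    have hri : pnorm (n + 1 + m) (n + 1) x / pnorm (n + 1 + m) (n + 1) y = r⁻¹ := by
      rw [hr, inv_div]
    rw [hri, cut_inv, cut_inv, Real.inv_rpow hr0.le]
    have ht : 0 < r ^ (-γ) := by positivity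
    generalize r ^ (-γ) = t at ht
    generalize hK : Ker n m (s * p) α β x y = K
    by_cases hc : r ∈ {r : ℝ | ε < |Real.log r|}
    · simp only [cut, indicator_of_mem hc]
      have h1 := fpos_nonneg p t
      have h2 := fpos_nonneg p t⁻¹
      have h3 := fneg_nonneg p t
      have h4 := fneg_nonneg p t⁻¹
      have key : ENNReal.ofReal (fpos p t) * ENNReal.ofReal (|u x| ^ p) +
          ENNReal.ofReal (fpos p t⁻¹) * ENNReal.ofReal (|u y| ^ p) ≤
          ENNReal.ofReal (|u x - u y| ^ p) + (ENNReal.ofReal (fneg p t⁻¹) *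
            ENNReal.ofReal (|u y| ^ p) + ENNReal.ofReal (fneg p t) * ENNReal.ofReal (|u x| ^ p)) := by
        rw [← ENNReal.ofReal_mul h1, ← ENNReal.ofReal_mul h2, ← ENNReal.ofReal_mul h3,
          ← ENNReal.ofReal_mul h4, ← ENNReal.ofReal_add (by positivity) (by positivity),
          ← ENNReal.ofReal_add (by positivity) (by positivity),
          ← ENNReal.ofReal_add (by positivity) (by positivity)]
        exact ENNReal.ofReal_le_ofReal (point_ineq h.hp ht)
      calc _ = K * (ENNReal.ofReal (fpos p t) * ENNReal.ofReal (|u x| ^ p) +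
          ENNReal.ofReal (fpos p t⁻¹) * ENNReal.ofReal (|u y| ^ p)) := by ring
        _ ≤ _ := mul_le_mul_right key K
        _ = _ := by ring
    · simp [cut, indicator_of_notMem hc]
  · have : Measurable fun q : E (n + 1 + m) × E (n + 1 + m) =>
        ENNReal.ofReal (|u q.1 - u q.2| ^ p) := by fun_prop
    exact this.mul measurable_Ker

/-- The Hardy inequality with the constant `CC`. -/
lemma Adm.lower (h : Adm n s p α β) (u : E (n + 1 + m) → ℝ) (hu : Measurable u)
    (hD : Wt n m (α + β - s * p) (fun x => ENNReal.ofReal (|u x| ^ p)) < ⊤) :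
    Wt n m (α + β - s * p) (fun x => ENNReal.ofReal (|u x| ^ p)) *
      ENNReal.ofReal (CC (n + 1 + m) (n + 1) s p α β) ≤ En n m s p α β u := by
  set D := Wt n m (α + β - s * p) (fun x => ENNReal.ofReal (|u x| ^ p)) with hDdef
  have hcut : ∀ ε : ℝ, 0 < ε → D * JJ n m (s * p) (fun r _ => ENNReal.ofReal (r ^ β) *
      cut ε r (ENNReal.ofReal (|1 - r ^ (-gam n s p α β)| ^ p))) ≤ En n m s p α β u := by
    intro ε hε
    have h1 := h.lower_cut u hu ε
    rw [h.JJ_cut_eq ε, mul_add] at h1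
    refine (ENNReal.add_le_add_iff_right ?_).1 h1
    have h2 := h.symm.cut_fin (m := m) hε
    rw [gam_comm] at h2
    exact (ENNReal.mul_lt_top hD (ENNReal.add_lt_top.2 ⟨h.cut_fin hε, h2⟩)).ne
  -- monotone convergence as the excluded neighbourhood of `r = 1` shrinks
  have hsup : JJ n m (s * p) (fun r _ => ENNReal.ofReal (r ^ β) *
      ENNReal.ofReal (|1 - r ^ (-gam n s p α β)| ^ p)) ≤
      ⨆ j : ℕ, JJ n m (s * p) (fun r _ => ENNReal.ofReal (r ^ β) *
      cut (1 / ((j : ℝ) + 1)) r (ENNReal.ofReal (|1 - r ^ (-gam n s p α β)| ^ p))) := by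
    unfold JJ
    rw [← lintegral_iSup]
    · refine lintegral_mono_ae ?_
      filter_upwards [ae_pnorm_pos (k := n + 1) (m := m) (by omega)] with y hy
      set r := pnorm (n + 1 + m) (n + 1) y with hr
      by_cases h1 : r = 1
      · rw [h1]
        simp [Real.zero_rpow h.p_pos.ne']
      · have hl : 0 < |Real.log r| := abs_pos.2 (Real.log_ne_zero_of_pos_of_ne_one hy h1)
        obtain ⟨j, hj⟩ := exists_nat_one_div_lt hl
        refine le_iSup_of_le j ?_
        rw [cut, indicator_of_mem (by exact hj)]
    · intro j
      exact Measurable.mul (by fun_prop) (Measurable.mul (by fun_prop)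
        ((measurable_cut _ (fun r => ENNReal.ofReal (|1 - r ^ (-gam n s p α β)| ^ p))
          (by fun_prop)).comp (measurable_pnorm _ _)))
    · intro i j hij y
      simp only
      gcongr
      unfold cut
      refine indicator_le_indicator_of_subset (fun r hr => ?_) (fun _ => zero_le) _
      have hr : 1 / ((i : ℝ) + 1) < |Real.log r| := hr
      have : 1 / ((j : ℝ) + 1) ≤ 1 / ((i : ℝ) + 1) := by gcongr
      exact this.trans_lt hr
  rw [← h.JJ_ground]
  refine (mul_le_mul_right hsup D).trans ?_
  rw [ENNReal.mul_iSup]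
  exact iSup_le fun j => hcut _ (by positivity)

end FracHardy

namespace FracHardy

variable {n m : ℕ} {s p α β σ a b : ℝ}

/-! ### Finiteness of the functionals on test functions -/

lemma Wt_mono {a : ℝ} {v w : E (n + 1 + m) → ENNReal} (H : ∀ x, v x ≤ w x) :
    Wt n m a v ≤ Wt n m a w :=
  lintegral_mono fun x => mul_le_mul_left (H x) _

lemma Wt_const_mul {a : ℝ} (c : ENNReal) (hc : c ≠ ⊤) (v : E (n + 1 + m) → ENNReal) :
    Wt n m a (fun x => c * v x) = c * Wt n m a v := by
  unfold Wt
  rw [← lintegral_const_mul' _ _ hc]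
  refine lintegral_congr fun x => ?_
  ring

/-- The weight `|x_k|^(α+β-sp)` is integrable on compact sets, which have to avoid `K` when
`k + α + β < sp`. -/
lemma Adm.Wt_indicator_lt_top (h : Adm n s p α β) (S : Set (E (n + 1 + m))) (hS : IsCompact S)
    (hSK : ((n + 1 : ℕ) : ℝ) + α + β < s * p → ∀ x, pnorm (n + 1 + m) (n + 1) x = 0 → x ∉ S) :
    Wt n m (α + β - s * p) (S.indicator 1) < ⊤ := by
  have hab := h.hαβ
  unfold Wt
  rcases lt_or_gt_of_ne h.hne with hlt | hlt
  · -- here the weight is integrable near `K`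
    obtain ⟨R, hR⟩ := hS.isBounded.exists_norm_le
    have hfin := lintegral_decay_lt_top n m h.σ_pos
      (show -((n + 1 : ℕ) : ℝ) < α + β - s * p by linarith)
      (show α + β - s * p < s * p by linarith [hab.2, h.σ_pos])
    set q := (((n + 1 + m : ℕ) : ℝ) + s * p) / 2 with hq
    have hq0 : 0 < q := by have := h.σ_pos; positivity
    refine lt_of_le_of_lt ?_ (ENNReal.mul_lt_top
      (ENNReal.ofReal_lt_top (r := (1 + R ^ 2) ^ q)) hfin)
    rw [← lintegral_const_mul' _ _ ENNReal.ofReal_ne_top]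
    refine lintegral_mono fun x => ?_
    by_cases hx : x ∈ S
    · have hxR := hR x hx
      have hN := pnorm_nonneg (n + 1 + m) (n + 1) x
      rw [indicator_of_mem hx, Pi.one_apply, one_mul, ← ENNReal.ofReal_mul (by positivity)]
      refine ENNReal.ofReal_le_ofReal ?_
      rw [← mul_assoc]
      refine le_mul_of_one_le_left (by positivity) ?_
      rw [Real.rpow_neg (by positivity), ← div_eq_mul_inv, one_le_div (by positivity)]
      have : ‖x‖ ^ 2 ≤ R ^ 2 := pow_le_pow_left₀ (norm_nonneg _) hxR 2
      exact Real.rpow_le_rpow (by positivity) (by linarith) hq0.le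
    · rw [indicator_of_notMem hx]; simp
  · -- here the support stays away from `K`
    rcases S.eq_empty_or_nonempty with rfl | hne
    · simp
    · obtain ⟨x₀, hx₀, hmin⟩ := hS.exists_isMinOn hne (continuous_pnorm (n + 1 + m) (n + 1)).continuousOn
      have hc : 0 < pnorm (n + 1 + m) (n + 1) x₀ := (pnorm_nonneg _ _ _).lt_of_ne' fun h0 =>
        hSK hlt x₀ h0 hx₀
      have hb : ∀ x, S.indicator (1 : E (n + 1 + m) → ENNReal) x *
          ENNReal.ofReal (pnorm (n + 1 + m) (n + 1) x ^ (α + β - s * p)) ≤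
          S.indicator (fun _ => ENNReal.ofReal (pnorm (n + 1 + m) (n + 1) x₀ ^ (α + β - s * p))) x := by
        intro x
        by_cases hx : x ∈ S
        · rw [indicator_of_mem hx, indicator_of_mem hx, Pi.one_apply, one_mul]
          exact ENNReal.ofReal_le_ofReal
            (Real.rpow_le_rpow_of_nonpos hc (hmin hx) (by linarith [hab.2]))
        · rw [indicator_of_notMem hx]; simp
      refine lt_of_le_of_lt (lintegral_mono hb) ?_
      rw [lintegral_indicator_const hS.measurableSet]
      exact ENNReal.mul_lt_top ENNReal.ofReal_lt_top hS.measure_lt_top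

lemma min_mul_le {ν R t : ℝ} (hν : ν ≤ R) (ht : 0 ≤ t) : min 1 (ν * t) ≤ max 1 R * min 1 t := by
  rcases le_total t 1 with h | h
  · rw [min_eq_right h]
    refine (min_le_right _ _).trans ?_
    gcongr
    exact hν.trans (le_max_right _ _)
  · rw [min_eq_left h, mul_one]
    exact (min_le_left _ _).trans (le_max_left _ _)

/-- Finiteness of the energy and of the Hardy integral of a test function. The energy is bounded by
a multiple of `∫ |x_k|^(α+β-sp) dx` over the support, since `|u x - u y|` is at most a multiple of `min(1, |x - y|)`
and vanishes unless one of the points lies in the support. -/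
lemma Adm.En_lt_top (h : Adm n s p α β) (u : E (n + 1 + m) → ℝ) (hu : ContDiff ℝ 1 u)
    (hc : HasCompactSupport u)
    (hSK : ((n + 1 : ℕ) : ℝ) + α + β < s * p →
      ∀ x, pnorm (n + 1 + m) (n + 1) x = 0 → x ∉ tsupport u) :
    En n m s p α β u < ⊤ ∧
      Wt n m (α + β - s * p) (fun x => ENNReal.ofReal (|u x| ^ p)) < ⊤ := by
  have hW := h.Wt_indicator_lt_top _ hc hSK
  have hp := h.p_pos
  set S := tsupport u with hS
  have hSm : MeasurableSet S := (isClosed_tsupport u).measurableSet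
  obtain ⟨L, hL⟩ := hu.lipschitzWith_of_hasCompactSupport hc one_ne_zero
  obtain ⟨M, hM⟩ := hc.exists_bound_of_continuous hu.continuous
  obtain ⟨R, hR⟩ := IsCompact.isBounded hc |>.exists_norm_le
  have hM0 : 0 ≤ M := (norm_nonneg _).trans (hM 0)
  have hlip : ∀ x y, |u x - u y| ≤ max (L : ℝ) (2 * M) * min 1 ‖x - y‖ := by
    intro x y
    rcases le_total ‖x - y‖ 1 with h1 | h1
    · rw [min_eq_right h1]
      have := hL.dist_le_mul x y
      rw [Real.dist_eq, dist_eq_norm] at this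
      exact this.trans (by gcongr; exact le_max_left _ _)
    · rw [min_eq_left h1, mul_one]
      have h2 := hM x
      have h3 := hM y
      rw [Real.norm_eq_abs] at h2 h3
      have := abs_sub (u x) (u y)
      exact (by linarith : |u x - u y| ≤ 2 * M).trans (le_max_right _ _)
  set C := max (L : ℝ) (2 * M) with hC
  have hC0 : 0 ≤ C := le_max_of_le_left L.2
  constructor
  · set A := (C * max 1 R) ^ p with hA
    have hg : Measurable (Function.uncurry fun (_ t : ℝ) => ENNReal.ofReal (min 1 t ^ p)) := by
      simp only [Function.uncurry_def]; fun_prop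
    have hv : Measurable (S.indicator (1 : E (n + 1 + m) → ENNReal)) :=
      measurable_one.indicator hSm
    have hb : En n m s p α β u ≤ ENNReal.ofReal A * (Wt n m (α + β - s * p) (S.indicator 1) *
        JJ n m (s * p) (fun r t => ENNReal.ofReal (r ^ β) * ENNReal.ofReal (min 1 t ^ p)) +
        Wt n m (α + β - s * p) (S.indicator 1) *
        JJ n m (s * p) (fun r t => ENNReal.ofReal (r ^ α) * ENNReal.ofReal (min 1 t ^ p))) := by
      rw [← lintegral_fixX _ _ hv hg, ← lintegral_fixY _ _ hv hg,
        ← lintegral2_add _ _ (measurable_fixX _ _ hv hg),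
        ← lintegral_const_mul' _ _ ENNReal.ofReal_ne_top]
      simp only [← lintegral_const_mul' _ _ (ENNReal.ofReal_ne_top (r := A))]
      refine lintegral2_mono_pos fun x y hx hy => ?_
      have hone : ∀ x y : E (n + 1 + m), x ∈ S → 0 < pnorm (n + 1 + m) (n + 1) x →
          ENNReal.ofReal (|u x - u y| ^ p) ≤ ENNReal.ofReal A *
            ENNReal.ofReal (min 1 (‖x - y‖ / pnorm (n + 1 + m) (n + 1) x) ^ p) := by
        intro x y hxS hx
        rw [← ENNReal.ofReal_mul (by positivity)]
        refine ENNReal.ofReal_le_ofReal ?_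
        rw [hA, ← Real.mul_rpow (by positivity) (by positivity)]
        refine Real.rpow_le_rpow (abs_nonneg _) ((hlip x y).trans ?_) hp.le
        rw [mul_assoc]
        gcongr
        have := min_mul_le ((pnorm_le_norm x).trans (hR x hxS))
          (div_nonneg (norm_nonneg (x - y)) hx.le)
        rwa [mul_div_cancel₀ _ hx.ne'] at this
      by_cases hxS : x ∈ S
      · refine le_trans ?_ (mul_le_mul_right (le_add_right le_rfl) _)
        rw [indicator_of_mem hxS, Pi.one_apply, one_mul, mul_left_comm, mul_comm]
        exact mul_le_mul_right (hone x y hxS hx) _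
      · by_cases hyS : y ∈ S
        · refine le_trans ?_ (mul_le_mul_right (le_add_left le_rfl) _)
          rw [indicator_of_mem hyS, Pi.one_apply, one_mul, mul_left_comm, mul_comm, abs_sub_comm,
            norm_sub_rev]
          exact mul_le_mul_right (hone y x hyS hy) _
        · rw [image_eq_zero_of_notMem_tsupport hxS, image_eq_zero_of_notMem_tsupport hyS]
          simp [Real.zero_rpow hp.ne']
    refine lt_of_le_of_lt hb (ENNReal.mul_lt_top ENNReal.ofReal_lt_top (ENNReal.add_lt_top.2
      ⟨ENNReal.mul_lt_top hW ?_, ENNReal.mul_lt_top hW ?_⟩))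
    · refine lt_of_le_of_lt (JJ_mono fun r t hr ht _ => ?_) (h.fin_β (m := m))
      rw [← ENNReal.ofReal_mul (by positivity)]
    · refine lt_of_le_of_lt (JJ_mono fun r t hr ht _ => ?_) (h.symm.fin_β (m := m))
      rw [← ENNReal.ofReal_mul (by positivity)]
  · refine lt_of_le_of_lt (Wt_mono (w := fun x => ENNReal.ofReal (M ^ p) * S.indicator 1 x)
      fun x => ?_) ?_
    · by_cases hxS : x ∈ S
      · rw [indicator_of_mem hxS, Pi.one_apply, mul_one]
        exact ENNReal.ofReal_le_ofReal (Real.rpow_le_rpow (abs_nonneg _) (hM x) hp.le)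
      · rw [image_eq_zero_of_notMem_tsupport hxS]
        simp [Real.zero_rpow hp.ne']
    · rw [Wt_const_mul _ ENNReal.ofReal_ne_top]
      exact ENNReal.mul_lt_top ENNReal.ofReal_lt_top hW

lemma Wt_ne_zero (u : E (n + 1 + m) → ℝ) (hu : Continuous u) (h0 : u ≠ 0) (a : ℝ) :
    Wt n m a (fun x => ENNReal.ofReal (|u x| ^ p)) ≠ 0 := by
  intro hcon
  unfold Wt at hcon
  rw [lintegral_eq_zero_iff (by have := hu.measurable; fun_prop)] at hcon
  apply h0
  refine (hu.ae_eq_iff_eq (volume : Measure (E (n + 1 + m))) continuous_zero).1 ?_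
  filter_upwards [hcon, ae_pnorm_pos (k := n + 1) (m := m) (by omega)] with x hx hN
  by_contra hux
  have h1 : 0 < |u x| := abs_pos.2 hux
  have h2 : 0 < |u x| ^ p := by positivity
  have h3 : 0 < pnorm (n + 1 + m) (n + 1) x ^ a := by positivity
  simp only [Pi.zero_apply, mul_eq_zero, ENNReal.ofReal_eq_zero] at hx
  rcases hx with hx | hx <;> linarith

end FracHardy

namespace FracHardy

variable {n m : ℕ} {s p α β σ a b : ℝ}

/-! ### The energy of a truncated ground state -/

/-- A bound for the increment of a slowly varying cutoff, in the scale-invariant variables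
`r = |y_k| / |x_k|` and `t = |x - y| / |x_k|`. -/
def GG (μ r t : ℝ) : ℝ := min 1 (μ * (|Real.log r| + t))

lemma measurable_GG (μ : ℝ) : Measurable (Function.uncurry (GG μ)) := by
  simp only [Function.uncurry_def, GG]
  fun_prop

lemma GG_nonneg {μ r t : ℝ} (hμ : 0 ≤ μ) (ht : 0 ≤ t) : 0 ≤ GG μ r t :=
  le_min zero_le_one (by positivity)

lemma GG_le {μ r t : ℝ} (h1 : μ ≤ 1) (hr : 0 < r) (hrt : |r - 1| ≤ t) :
    GG μ r t ≤ 3 * min 1 t := by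
  have ht : 0 ≤ t := (abs_nonneg _).trans hrt
  have h2 := min_log_le hr hrt
  have h3 : GG μ r t ≤ min 1 |Real.log r| + min 1 t := by
    have hl := abs_nonneg (Real.log r)
    unfold GG
    rcases le_total 1 |Real.log r| with hh | hh
    · rw [min_eq_left hh]
      have : 0 ≤ min 1 t := le_min zero_le_one ht
      linarith [min_le_left 1 (μ * (|Real.log r| + t))]
    rcases le_total 1 t with hh' | hh'
    · rw [min_eq_left hh']
      have : 0 ≤ min 1 |Real.log r| := le_min zero_le_one hl
      linarith [min_le_left 1 (μ * (|Real.log r| + t))]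
    rw [min_eq_right hh, min_eq_right hh']
    refine (min_le_right _ _).trans ?_
    exact mul_le_of_le_one_left (by positivity) h1
  linarith

/-- The error made by a cutoff disappears as the cutoff becomes flat. -/
lemma tendsto_JJ_GG {δ : ℝ} (hσ : 0 < σ) (hσp : σ < p) (hδ : -((n + 1 : ℕ) : ℝ) < δ) (hδσ : δ < σ) :
    Tendsto (fun μ => JJ n m σ (fun r t => ENNReal.ofReal (r ^ δ * GG μ r t ^ p)))
      (𝓝[>] 0) (𝓝 0) := by
  have hp : 0 < p := hσ.trans hσp
  have hfin := JJ_lt_top (n := n) (m := m) hσ hσp hδ hδσ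
  have hfin' : JJ n m σ (fun r t => ENNReal.ofReal (3 ^ p) *
      ENNReal.ofReal (r ^ δ * min 1 t ^ p)) < ⊤ := by
    rw [JJ_const_mul _ ENNReal.ofReal_ne_top]
    exact ENNReal.mul_lt_top ENNReal.ofReal_lt_top hfin
  have hz : (0 : ENNReal) = ∫⁻ _ : E (n + 1 + m), (0 : ENNReal) := by simp
  rw [hz]
  unfold JJ
  refine tendsto_lintegral_filter_of_dominated_convergence _ ?_ ?_ hfin'.ne ?_
  · filter_upwards with μ
    have := measurable_GG μ
    refine Measurable.mul (by fun_prop) (JJ_meas (h := fun r t => ENNReal.ofReal (r ^ δ * GG μ r t ^ p)) ?_)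
    have h1 : Measurable fun q : ℝ × ℝ => GG μ q.1 q.2 := this
    simp only [Function.uncurry_def]
    fun_prop
  · filter_upwards [Ioo_mem_nhdsGT (show (0 : ℝ) < 1 by norm_num)] with μ hμ
    filter_upwards [ae_pnorm_pos (k := n + 1) (m := m) (by omega)] with y hy
    have hyt := abs_pnorm_sub_le (jn (eLast n) (0 : E m)) y
    rw [pnorm_e, abs_sub_comm] at hyt
    gcongr
    rw [← ENNReal.ofReal_mul (by positivity)]
    refine ENNReal.ofReal_le_ofReal ?_
    have h1 := GG_le hμ.2.le hy hyt
    have h2 := GG_nonneg (r := pnorm (n + 1 + m) (n + 1) y) hμ.1.le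
      (norm_nonneg (jn (eLast n) (0 : E m) - y))
    have h3 := Real.rpow_le_rpow h2 h1 hp.le
    rw [Real.mul_rpow (by norm_num) (le_min zero_le_one (norm_nonneg _))] at h3
    calc _ ≤ pnorm (n + 1 + m) (n + 1) y ^ δ * _ := mul_le_mul_of_nonneg_left h3 (by positivity)
      _ = _ := by ring
  · filter_upwards with y
    have hc : Continuous fun μ : ℝ => pnorm (n + 1 + m) (n + 1) y ^ δ *
        GG μ (pnorm (n + 1 + m) (n + 1) y) ‖jn (eLast n) (0 : E m) - y‖ ^ p := by
      unfold GG
      refine continuous_const.mul (Continuous.rpow_const (by fun_prop) fun _ => Or.inr hp.le)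
    have h0 := (ENNReal.continuous_ofReal.comp hc).tendsto 0
    have h1 := ENNReal.Tendsto.const_mul (a := ENNReal.ofReal
      (‖jn (eLast n) (0 : E m) - y‖ ^ (-((n + 1 + m : ℕ) : ℝ) - σ))) h0
        (Or.inr ENNReal.ofReal_ne_top)
    refine (h1.mono_left nhdsWithin_le_nhds).congr' ?_ |>.trans ?_
    · exact Eventually.of_forall fun μ => rfl
    · simp [GG, Real.zero_rpow hp.ne']

/-- The Hardy integral `∫_O |x_k|^{-γp} |x_k|^{α+β-sp} dx = ∫_O |x_k|^{-k} dx` of the ground state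
over the set `O`. -/
def Dset (n m : ℕ) (s p α β : ℝ) (O : Set (E (n + 1 + m))) : ENNReal :=
  Wt n m (α + β - s * p) (O.indicator fun x =>
    ENNReal.ofReal (pnorm (n + 1 + m) (n + 1) x ^ (-gam n s p α β * p)))

/-- The energy of `v |x_k|^{-γ}` for a cutoff `v` living on `O` exceeds the optimal multiple of its
Hardy integral only by an error controlled by the flatness `μ` of the cutoff. -/
lemma Adm.upper (h : Adm n s p α β) (v : E (n + 1 + m) → ℝ) (hv : Measurable v)
    (O : Set (E (n + 1 + m))) (hO : MeasurableSet O)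
    (hvO : ∀ x, x ∉ O → v x = 0) {μ : ℝ} (hμ : 0 ≤ μ)
    (hvμ : ∀ x y, x ∈ O → 0 < pnorm (n + 1 + m) (n + 1) x → 0 < pnorm (n + 1 + m) (n + 1) y →
      |v x - v y| ≤ GG μ (pnorm (n + 1 + m) (n + 1) y / pnorm (n + 1 + m) (n + 1) x)
        (‖x - y‖ / pnorm (n + 1 + m) (n + 1) x))
    (u : E (n + 1 + m) → ℝ)
    (hu : ∀ x, u x = pnorm (n + 1 + m) (n + 1) x ^ (-gam n s p α β) * v x)
    {t : ℝ} (ht0 : 0 < t) (ht1 : t < 1) :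
    En n m s p α β u ≤ ENNReal.ofReal ((1 - t) ^ (1 - p)) *
        (Wt n m (α + β - s * p) (fun x => ENNReal.ofReal (|u x| ^ p)) *
          ENNReal.ofReal (CC (n + 1 + m) (n + 1) s p α β)) +
      ENNReal.ofReal (t ^ (1 - p)) * (Dset n m s p α β O *
        (JJ n m (s * p) (fun r t =>
            ENNReal.ofReal (r ^ (β - gam n s p α β * p) * GG μ r t ^ p)) +
          JJ n m (s * p) (fun r t => ENNReal.ofReal (r ^ α * GG μ r t ^ p)))) := by
  have hp := h.p_pos
  set γ := gam n s p α β with hγ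
  have hum : Measurable u := by
    have : u = fun x => pnorm (n + 1 + m) (n + 1) x ^ (-γ) * v x := funext hu
    rw [this]; have := measurable_pnorm (n + 1 + m) (n + 1); fun_prop
  have hGm : Measurable fun q : ℝ × ℝ => GG μ q.1 q.2 := measurable_GG μ
  have hv1 : Measurable fun x => ENNReal.ofReal (|u x| ^ p) := by fun_prop
  have hv2 : Measurable (O.indicator fun x =>
      ENNReal.ofReal (pnorm (n + 1 + m) (n + 1) x ^ (-γ * p))) := by
    have := measurable_pnorm (n + 1 + m) (n + 1)
    exact Measurable.indicator (by fun_prop) hO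
  have hg1 : Measurable (Function.uncurry fun (r _ : ℝ) => ENNReal.ofReal (|1 - r ^ (-γ)| ^ p)) := by
    simp only [Function.uncurry_def]; fun_prop
  have hg2 : Measurable (Function.uncurry fun (r t : ℝ) =>
      ENNReal.ofReal (r ^ (-γ * p) * GG μ r t ^ p)) := by
    simp only [Function.uncurry_def]; fun_prop
  have hg3 : Measurable (Function.uncurry fun (r t : ℝ) => ENNReal.ofReal (GG μ r t ^ p)) := by
    simp only [Function.uncurry_def]; fun_prop
  have e2 : JJ n m (s * p) (fun r t => ENNReal.ofReal (r ^ (β - γ * p) * GG μ r t ^ p)) =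
      JJ n m (s * p) (fun r t => ENNReal.ofReal (r ^ β) *
        ENNReal.ofReal (r ^ (-γ * p) * GG μ r t ^ p)) := by
    refine JJ_congr fun r t hr _ _ => ?_
    rw [← ENNReal.ofReal_mul (by positivity), ← mul_assoc, ← Real.rpow_add hr]
    congr 3; ring_nf
  have e3 : JJ n m (s * p) (fun r t => ENNReal.ofReal (r ^ α * GG μ r t ^ p)) =
      JJ n m (s * p) (fun r t => ENNReal.ofReal (r ^ α) * ENNReal.ofReal (GG μ r t ^ p)) := by
    refine JJ_congr fun r t hr _ _ => ?_
    rw [← ENNReal.ofReal_mul (by positivity)]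
  rw [e2, e3, ← h.JJ_ground, mul_add]
  unfold Dset
  rw [← lintegral_fixX _ _ hv1 hg1, ← lintegral_fixX _ _ hv2 hg2, ← lintegral_fixY _ _ hv2 hg3,
    ← lintegral2_add _ _ (measurable_fixX _ _ hv2 hg2)]
  have hmul : ∀ (c : ℝ) (f : E (n + 1 + m) → E (n + 1 + m) → ENNReal),
      ENNReal.ofReal c * ∫⁻ x, ∫⁻ y, f x y = ∫⁻ x, ∫⁻ y, ENNReal.ofReal c * f x y := by
    intro c f
    rw [← lintegral_const_mul' _ _ ENNReal.ofReal_ne_top]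
    refine lintegral_congr fun x => ?_
    rw [lintegral_const_mul' _ _ ENNReal.ofReal_ne_top]
  rw [hmul, hmul, ← lintegral2_add]
  swap
  · exact measurable_const.mul (measurable_fixX _ _ hv1 hg1)
  refine lintegral2_mono_pos fun x y hx hy => ?_
  set X := pnorm (n + 1 + m) (n + 1) x with hX
  set Y := pnorm (n + 1 + m) (n + 1) y with hY
  set K := Ker n m (s * p) α β x y with hK
  set G1 := GG μ (Y / X) (‖x - y‖ / X) with hG1
  set G2 := GG μ (X / Y) (‖x - y‖ / Y) with hG2
  have hG1n : 0 ≤ G1 := GG_nonneg hμ (by positivity)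
  have hG2n : 0 ≤ G2 := GG_nonneg hμ (by positivity)
  have hYX : X ^ (-γ) * (Y / X) ^ (-γ) = Y ^ (-γ) := by
    rw [← Real.mul_rpow hx.le (by positivity), mul_div_cancel₀ _ hx.ne']
  -- the increment of `u` splits into those of the ground state and of the cutoff
  have hsplit : |u x - u y| ^ p ≤ (1 - t) ^ (1 - p) * (|u x| ^ p * |1 - (Y / X) ^ (-γ)| ^ p) +
      t ^ (1 - p) * (Y ^ (-γ * p) * |v x - v y| ^ p) := by
    have h1 : |u x - u y| ≤ |u x| * |1 - (Y / X) ^ (-γ)| + Y ^ (-γ) * |v x - v y| := by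
      have hYp : Y ^ (-γ) = |Y ^ (-γ)| := (abs_of_pos (by positivity)).symm
      rw [← abs_mul]
      nth_rw 1 [hYp]
      rw [← abs_mul]
      refine (le_of_eq ?_).trans (abs_add_le _ _)
      rw [hu, hu, ← hX, ← hY]
      congr 1
      linear_combination (v x) * hYX
    refine (Real.rpow_le_rpow (abs_nonneg _) h1 hp.le).trans
      ((conv_ineq h.hp ht0 ht1 (by positivity) (by positivity)).trans (le_of_eq ?_))
    rw [Real.mul_rpow (abs_nonneg _) (abs_nonneg _), Real.mul_rpow (by positivity) (abs_nonneg _),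
      Real.rpow_mul hy.le]
  have hcut : ENNReal.ofReal (Y ^ (-γ * p) * |v x - v y| ^ p) ≤
      O.indicator (fun x => ENNReal.ofReal (pnorm (n + 1 + m) (n + 1) x ^ (-γ * p))) x *
        ENNReal.ofReal ((Y / X) ^ (-γ * p) * G1 ^ p) +
      O.indicator (fun x => ENNReal.ofReal (pnorm (n + 1 + m) (n + 1) x ^ (-γ * p))) y *
        ENNReal.ofReal (G2 ^ p) := by
    by_cases hxO : x ∈ O
    · refine le_trans ?_ le_self_add
      rw [indicator_of_mem hxO, ← ENNReal.ofReal_mul (by positivity), ← hX, ← mul_assoc,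
        ← Real.mul_rpow hx.le (by positivity), mul_div_cancel₀ _ hx.ne']
      have := Real.rpow_le_rpow (abs_nonneg _) (hvμ x y hxO hx hy) hp.le
      exact ENNReal.ofReal_le_ofReal (by gcongr)
    by_cases hyO : y ∈ O
    · refine le_trans ?_ le_add_self
      rw [indicator_of_mem hyO, ← ENNReal.ofReal_mul (by positivity), ← hY]
      have := hvμ y x hyO hy hx
      rw [abs_sub_comm, norm_sub_rev] at this
      have := Real.rpow_le_rpow (abs_nonneg _) this hp.le
      exact ENNReal.ofReal_le_ofReal (by gcongr)
    · rw [hvO x hxO, hvO y hyO]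
      simp [Real.zero_rpow hp.ne']
  calc ENNReal.ofReal (|u x - u y| ^ p) * K
      ≤ (ENNReal.ofReal ((1 - t) ^ (1 - p)) * (ENNReal.ofReal (|u x| ^ p) *
          ENNReal.ofReal (|1 - (Y / X) ^ (-γ)| ^ p)) + ENNReal.ofReal (t ^ (1 - p)) *
          (O.indicator (fun x => ENNReal.ofReal (pnorm (n + 1 + m) (n + 1) x ^ (-γ * p))) x *
        ENNReal.ofReal ((Y / X) ^ (-γ * p) * G1 ^ p) +
      O.indicator (fun x => ENNReal.ofReal (pnorm (n + 1 + m) (n + 1) x ^ (-γ * p))) y *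
        ENNReal.ofReal (G2 ^ p))) * K := by
        gcongr
        refine (ENNReal.ofReal_le_ofReal hsplit).trans ?_
        have hq : 0 < 1 - t := by linarith
        rw [ENNReal.ofReal_add (by positivity) (by positivity), ENNReal.ofReal_mul (by positivity),
          ENNReal.ofReal_mul (by positivity), ENNReal.ofReal_mul (p := t ^ (1 - p)) (by positivity)]
        gcongr
    _ = _ := by ring

end FracHardy

namespace FracHardy

variable {n m : ℕ} {s p α β σ a b : ℝ}

/-! ### Logarithmic volume growth of the truncation regions -/

/-- The density `r^{-k}`, `k = n + 1`, on the shell `|log r| ≤ ℓ`. -/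
def shell (n : ℕ) (l r : ℝ) : ENNReal :=
  {r : ℝ | 0 < r ∧ |Real.log r| ≤ l}.indicator
    (fun r => ENNReal.ofReal (r ^ (-((n + 1 : ℕ) : ℝ)))) r

lemma measurable_shell (n : ℕ) (l : ℝ) : Measurable (shell n l) := by
  unfold shell
  refine Measurable.indicator (by fun_prop) ?_
  exact (measurableSet_lt measurable_const measurable_id).inter
    (measurableSet_le (f := fun r : ℝ => |Real.log r|) (by fun_prop) measurable_const)

lemma abs_log_le_iff {l r : ℝ} (hr : 0 < r) : |Real.log r| ≤ l ↔ r ∈ Icc (exp (-l)) (exp l) := by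
  rw [abs_le, Real.log_le_iff_le_exp hr, Real.le_log_iff_exp_le hr, mem_Icc]

lemma lintegral_shell (n : ℕ) {l : ℝ} (hl : 0 ≤ l) :
    ∫⁻ x : E (n + 1), shell n l ‖x‖ =
      ENNReal.ofReal (sphereVol n) * ENNReal.ofReal (2 * l) := by
  rw [lintegral_radial n _ (measurable_shell n l)]
  congr 1
  have h0 : ∀ r ∈ Ioi (0 : ℝ), ENNReal.ofReal (r ^ n) * shell n l r =
      (Icc (exp (-l)) (exp l)).indicator (fun r => ENNReal.ofReal r⁻¹) r := by
    intro r hr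
    have hr : 0 < r := hr
    unfold shell
    by_cases hm : r ∈ Icc (exp (-l)) (exp l)
    · rw [indicator_of_mem hm, indicator_of_mem (by exact ⟨hr, (abs_log_le_iff hr).2 hm⟩),
        ← ENNReal.ofReal_mul (by positivity)]
      congr 1
      rw [Real.rpow_neg hr.le, Real.rpow_natCast]
      field_simp
      ring
    · rw [indicator_of_notMem hm, indicator_of_notMem fun h => hm ((abs_log_le_iff hr).1 h.2),
        mul_zero]
  rw [setLIntegral_congr_fun measurableSet_Ioi h0, setLIntegral_indicator measurableSet_Icc]
  have hsub : Icc (exp (-l)) (exp l) ⊆ Ioi 0 := fun r hr => (exp_pos _).trans_le hr.1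
  have hle : exp (-l) ≤ exp l := exp_le_exp.2 (by linarith)
  have hint : IntegrableOn (fun r : ℝ => r⁻¹) (Icc (exp (-l)) (exp l)) :=
    (continuousOn_inv₀.mono fun r hr => (hsub hr).ne').integrableOn_Icc
  rw [inter_eq_left.2 hsub, ← ofReal_integral_eq_lintegral_ofReal hint
    (ae_restrict_of_forall_mem measurableSet_Icc fun r hr => inv_nonneg.2 (hsub hr).le),
    integral_Icc_eq_integral_Ioc, ← intervalIntegral.integral_of_le hle,
    integral_inv_of_pos (exp_pos _) (exp_pos _), ← Real.exp_sub, Real.log_exp]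
  congr 1; ring

/-- The region `|log |x_k|| ≤ ℓ`, `‖x‖ ≤ ρ`. -/
def TT (n m : ℕ) (l ρ : ℝ) : Set (E (n + 1 + m)) :=
  {x | (0 < pnorm (n + 1 + m) (n + 1) x ∧ |Real.log (pnorm (n + 1 + m) (n + 1) x)| ≤ l) ∧ ‖x‖ ≤ ρ}

lemma measurableSet_TT (n m : ℕ) (l ρ : ℝ) : MeasurableSet (TT n m l ρ) := by
  have := measurable_pnorm (n + 1 + m) (n + 1)
  exact ((measurableSet_lt measurable_const this).inter
    (measurableSet_le (Real.measurable_log.comp this).abs measurable_const)).inter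
    (measurableSet_le measurable_norm measurable_const)

/-- The integrand of `Dset` is `|x_k|^(-γp) |x_k|^(α+β-sp) = |x_k|^(-k)`. -/
lemma Adm.Dset_eq (h : Adm n s p α β) (l ρ : ℝ) : Dset n m s p α β (TT n m l ρ) =
    ∫⁻ x : E (n + 1 + m), {x | ‖x‖ ≤ ρ}.indicator
      (fun x => shell n l (pnorm (n + 1 + m) (n + 1) x)) x := by
  unfold Dset Wt
  refine lintegral_congr fun x => ?_
  by_cases h1 : ‖x‖ ≤ ρ
  · by_cases h2 : 0 < pnorm (n + 1 + m) (n + 1) x ∧ |Real.log (pnorm (n + 1 + m) (n + 1) x)| ≤ l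
    · rw [indicator_of_mem (show x ∈ TT n m l ρ from ⟨h2, h1⟩),
        indicator_of_mem (show x ∈ {x | ‖x‖ ≤ ρ} from h1), shell, indicator_of_mem (by exact h2),
        ← ENNReal.ofReal_mul (by have := h2.1; positivity), ← Real.rpow_add h2.1, neg_mul,
        h.gam_mul]
      congr 2; ring
    · rw [indicator_of_notMem (show x ∉ TT n m l ρ from fun hx => h2 hx.1), zero_mul,
        indicator_of_mem (show x ∈ {x | ‖x‖ ≤ ρ} from h1), shell, indicator_of_notMem (by exact h2)]
  · rw [indicator_of_notMem (show x ∉ TT n m l ρ from fun hx => h1 hx.2), zero_mul,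
        indicator_of_notMem (show x ∉ {x | ‖x‖ ≤ ρ} from h1)]

lemma lintegral_shell_prod (n m : ℕ) {l : ℝ} (hl : 0 ≤ l) (ρ : ℝ) :
    ∫⁻ a : E (n + 1), ∫⁻ b : E m, (Metric.closedBall (0 : E m) ρ).indicator
      (fun _ => shell n l ‖a‖) b =
    ENNReal.ofReal (sphereVol n) * ENNReal.ofReal (2 * l) *
      volume (Metric.closedBall (0 : E m) ρ) := by
  rw [← lintegral_shell n hl, ← lintegral_mul_const]
  · refine lintegral_congr fun a => ?_
    rw [lintegral_indicator_const Metric.isClosed_closedBall.measurableSet]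
  · exact (measurable_shell n l).comp measurable_norm

lemma measurable_shell_ind (n m : ℕ) (l ρ : ℝ) :
    Measurable ({x : E (n + 1 + m) | ‖x‖ ≤ ρ}.indicator
      (fun x => shell n l (pnorm (n + 1 + m) (n + 1) x))) :=
  Measurable.indicator ((measurable_shell n l).comp (measurable_pnorm _ _))
    (measurableSet_le (by fun_prop) measurable_const)

lemma Adm.Dset_le (h : Adm n s p α β) {l : ℝ} (hl : 0 ≤ l) (ρ : ℝ) :
    Dset n m s p α β (TT n m l ρ) ≤ ENNReal.ofReal (sphereVol n) * ENNReal.ofReal (2 * l) *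
      volume (Metric.closedBall (0 : E m) ρ) := by
  rw [h.Dset_eq, lintegral_split _ (measurable_shell_ind n m l ρ), ← lintegral_shell_prod n m hl]
  refine lintegral_mono fun a => lintegral_mono fun b => ?_
  refine indicator_apply_le' (fun hx => ?_) fun _ => zero_le
  have hx : ‖jn a b‖ ≤ ρ := hx
  have hb : ‖b‖ ≤ ρ := by
    refine le_trans ?_ hx
    rw [norm_jn]
    exact Real.le_sqrt_of_sq_le (by nlinarith [sq_nonneg ‖a‖])
  rw [indicator_of_mem (by simpa using hb), pnorm_jn]

/-- The condition `2 e^ℓ ≤ ρ` puts the product of `{|log |a|| ≤ ℓ}` and the ball of radius `ρ / 2`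
inside the region. -/
lemma Adm.le_Dset (h : Adm n s p α β) {l : ℝ} (hl : 0 ≤ l) {ρ : ℝ} (hρ : 2 * exp l ≤ ρ) :
    ENNReal.ofReal (sphereVol n) * ENNReal.ofReal (2 * l) *
      volume (Metric.closedBall (0 : E m) (ρ / 2)) ≤ Dset n m s p α β (TT n m l ρ) := by
  rw [h.Dset_eq, lintegral_split _ (measurable_shell_ind n m l ρ), ← lintegral_shell_prod n m hl]
  refine lintegral_mono fun a => lintegral_mono fun b => ?_
  refine indicator_apply_le' (fun hb => ?_) fun _ => zero_le
  have hb : ‖b‖ ≤ ρ / 2 := by simpa using hb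
  by_cases ha : 0 < ‖a‖ ∧ |Real.log ‖a‖| ≤ l
  · have h1 := ((abs_log_le_iff ha.1).1 ha.2).2
    have hx : ‖jn a b‖ ≤ ρ := by
      rw [norm_jn]
      have h0 := norm_nonneg b
      refine Real.sqrt_le_iff.2 ⟨by linarith [exp_pos l], ?_⟩
      nlinarith [ha.1]
    rw [indicator_of_mem (by exact hx), pnorm_jn]
  · rw [shell, indicator_of_notMem (by exact ha)]
    exact zero_le

lemma Adm.Dset_lt_top (h : Adm n s p α β) {l : ℝ} (hl : 0 ≤ l) (ρ : ℝ) :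
    Dset n m s p α β (TT n m l ρ) < ⊤ :=
  (h.Dset_le hl ρ).trans_lt (ENNReal.mul_lt_top
    (ENNReal.mul_lt_top ENNReal.ofReal_lt_top ENNReal.ofReal_lt_top) measure_closedBall_lt_top)

/-- Doubling: the Hardy integrals over comparable truncation regions are comparable, with a
constant independent of the truncation. -/
lemma Adm.Dset_doubling (h : Adm n s p α β) {l : ℝ} (hl : 0 ≤ l) {ρ : ℝ} (hρ : 2 * exp l ≤ ρ) :
    Dset n m s p α β (TT n m (2 * l) (2 * ρ)) ≤
      ENNReal.ofReal (2 * 4 ^ m) * Dset n m s p α β (TT n m l ρ) := by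
  have hρ0 : 0 < ρ := by linarith [exp_pos l]
  refine (h.Dset_le (by positivity) _).trans (le_trans (le_of_eq ?_)
    (mul_le_mul_right (h.le_Dset hl hρ) _))
  rw [Measure.addHaar_closedBall _ _ (by positivity), Measure.addHaar_closedBall _ _ (by positivity),
    finrank_euclideanSpace_fin]
  have e1 : ENNReal.ofReal (2 * (2 * l)) * ENNReal.ofReal ((2 * ρ) ^ m) =
      ENNReal.ofReal (2 * 4 ^ m) * ENNReal.ofReal (2 * l) * ENNReal.ofReal ((ρ / 2) ^ m) := by
    rw [← ENNReal.ofReal_mul (by positivity), ← ENNReal.ofReal_mul (by positivity),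
      ← ENNReal.ofReal_mul (by positivity)]
    congr 1
    have : (2 * ρ) ^ m = 4 ^ m * (ρ / 2) ^ m := by rw [← mul_pow]; congr 1; ring
    rw [this]; ring
  calc _ = ENNReal.ofReal (sphereVol n) * (ENNReal.ofReal (2 * (2 * l)) *
        ENNReal.ofReal ((2 * ρ) ^ m)) * volume (Metric.ball (0 : E m) 1) := by ring
    _ = _ := by rw [e1]; ring

end FracHardy

namespace FracHardy

variable {n m : ℕ} {s p α β σ a b : ℝ}

/-! ### The approximate minimizers -/

/-- A Lipschitz bump function equal to `1` on the unit ball and to `0` outside the ball of radius `2`. -/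
lemma exists_cutoff (F : Type) [NormedAddCommGroup F] [InnerProductSpace ℝ F]
    [FiniteDimensional ℝ F] : ∃ (φ : F → ℝ) (L : ℝ), ContDiff ℝ 1 φ ∧ 0 ≤ L ∧
      (∀ x y, |φ x - φ y| ≤ L * ‖x - y‖) ∧ (∀ x, 0 ≤ φ x) ∧ (∀ x, φ x ≤ 1) ∧
      (∀ x, ‖x‖ ≤ 1 → φ x = 1) ∧ (∀ x, 2 ≤ ‖x‖ → φ x = 0) := by
  let f : ContDiffBump (0 : F) := ⟨1, 2, one_pos, one_lt_two⟩
  have hf : ContDiff ℝ 1 (f : F → ℝ) := f.contDiff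
  obtain ⟨C, hC⟩ := hf.lipschitzWith_of_hasCompactSupport f.hasCompactSupport one_ne_zero
  refine ⟨f, C, hf, C.2, fun x y => ?_, fun x => f.nonneg, fun x => f.le_one, fun x hx => ?_,
    fun x hx => ?_⟩
  · have := hC.dist_le_mul x y
    rwa [Real.dist_eq, dist_eq_norm] at this
  · exact f.one_of_mem_closedBall (by simpa [f] using hx)
  · exact f.zero_of_le_dist (by simpa [f] using hx)

/-- The cutoff `φ(ε log |x_k|) χ(x / R)`, vanishing on `K`. -/
def vv (n m : ℕ) (φ : ℝ → ℝ) (χ : E (n + 1 + m) → ℝ) (ε R : ℝ) (x : E (n + 1 + m)) : ℝ :=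
  if pnorm (n + 1 + m) (n + 1) x = 0 then 0 else
    φ (ε * Real.log (pnorm (n + 1 + m) (n + 1) x)) * χ (R⁻¹ • x)

lemma contDiffAt_pnorm (d k : ℕ) (x : E d) (hx : pnorm d k x ≠ 0) : ContDiffAt ℝ 1 (pnorm d k) x := by
  unfold pnorm at hx ⊢
  refine ContDiffAt.sqrt ?_ fun h => hx (by rw [h, Real.sqrt_zero])
  refine ContDiffAt.sum fun i _ => ?_
  split_ifs
  · fun_prop
  · exact contDiffAt_const

section
variable {φ : ℝ → ℝ} {χ : E (n + 1 + m) → ℝ} {ε R : ℝ}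

/-- The region containing the support of the cutoff. -/
lemma vv_mem (hφ : ∀ x, 2 ≤ ‖x‖ → φ x = 0) (hχ : ∀ x, 2 ≤ ‖x‖ → χ x = 0) (hε : 0 < ε) (hR : 0 < R)
    {x : E (n + 1 + m)} (hx : vv n m φ χ ε R x ≠ 0) : x ∈ TT n m (2 * (1 / ε)) (2 * R) := by
  unfold vv at hx
  split_ifs at hx with h0
  · exact absurd rfl hx
  have h1 : ‖ε * Real.log (pnorm (n + 1 + m) (n + 1) x)‖ < 2 := by
    by_contra! hc
    exact hx (by rw [hφ _ hc, zero_mul])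
  have h2 : ‖R⁻¹ • x‖ < 2 := by
    by_contra! hc
    exact hx (by rw [hχ _ hc, mul_zero])
  rw [Real.norm_eq_abs, abs_mul, abs_of_pos hε] at h1
  rw [norm_smul, Real.norm_eq_abs, abs_of_pos (inv_pos.2 hR), inv_mul_lt_iff₀ hR] at h2
  refine ⟨⟨(pnorm_nonneg _ _ _).lt_of_ne' h0, ?_⟩, by linarith⟩
  rw [mul_one_div, le_div_iff₀ hε]
  linarith

/-- The region on which the cutoff equals `1`. -/
lemma vv_eq_one (hφ : ∀ x, ‖x‖ ≤ 1 → φ x = 1) (hχ : ∀ x, ‖x‖ ≤ 1 → χ x = 1) (hε : 0 < ε) (hR : 0 < R)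
    {x : E (n + 1 + m)} (hx : x ∈ TT n m (1 / ε) R) : vv n m φ χ ε R x = 1 := by
  obtain ⟨⟨h0, h1⟩, h2⟩ := hx
  rw [vv, if_neg h0.ne', hφ, hχ, mul_one]
  · rw [norm_smul, Real.norm_eq_abs, abs_of_pos (inv_pos.2 hR), inv_mul_le_iff₀ hR]
    linarith
  · rw [Real.norm_eq_abs, abs_mul, abs_of_pos hε]
    rw [le_div_iff₀ hε] at h1
    linarith

/-- Flatness of the cutoff; the radius `R ≥ e^{2/ε} / ε` is so large that `χ(· / R)` varies by at
most `ε` on the scale `|x_k| ≤ e^{2/ε}`. -/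
lemma vv_flat {L : ℝ} (hL : 0 ≤ L) (hφ : ∀ x y, |φ x - φ y| ≤ L * ‖x - y‖) (hχ : ∀ x y, |χ x - χ y| ≤ L * ‖x - y‖)
    (hφ0 : ∀ x, 0 ≤ φ x) (hφ1 : ∀ x, φ x ≤ 1) (hχ0 : ∀ x, 0 ≤ χ x) (hχ1 : ∀ x, χ x ≤ 1)
    (hε : 0 < ε) (hR : 0 < R) (hRε : exp (2 * (1 / ε)) ≤ ε * R) (x y : E (n + 1 + m))
    (hx : x ∈ TT n m (2 * (1 / ε)) (2 * R))
    (hy : 0 < pnorm (n + 1 + m) (n + 1) y) :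
    |vv n m φ χ ε R x - vv n m φ χ ε R y| ≤ GG (L * ε)
      (pnorm (n + 1 + m) (n + 1) y / pnorm (n + 1 + m) (n + 1) x)
      (‖x - y‖ / pnorm (n + 1 + m) (n + 1) x) := by
  have hx0 := hx.1.1
  have hxl := ((abs_log_le_iff hx0).1 hx.1.2).2
  unfold vv
  rw [if_neg hx0.ne', if_neg hy.ne']
  set X := pnorm (n + 1 + m) (n + 1) x
  set Y := pnorm (n + 1 + m) (n + 1) y
  have b1 := hφ0 (ε * Real.log X)
  have b2 := hφ1 (ε * Real.log X)
  have b3 := hφ0 (ε * Real.log Y)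
  have b4 := hφ1 (ε * Real.log Y)
  have c1 := hχ0 (R⁻¹ • x)
  have c2 := hχ1 (R⁻¹ • x)
  have c3 := hχ0 (R⁻¹ • y)
  have c4 := hχ1 (R⁻¹ • y)
  have hA := hφ (ε * Real.log X) (ε * Real.log Y)
  have hB := hχ (R⁻¹ • x) (R⁻¹ • y)
  rw [← mul_sub, Real.norm_eq_abs, abs_mul, abs_of_pos hε, abs_sub_comm (Real.log X),
    ← Real.log_div hy.ne' hx0.ne'] at hA
  rw [← smul_sub, norm_smul, Real.norm_eq_abs, abs_of_pos (inv_pos.2 hR)] at hB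
  refine le_min ?_ ?_
  · refine abs_le.2 ⟨?_, ?_⟩
    · nlinarith [mul_nonneg b1 c1, mul_le_one₀ b4 c3 c4]
    · nlinarith [mul_nonneg b3 c3, mul_le_one₀ b2 c1 c2]
  · have h1 : R⁻¹ * ‖x - y‖ ≤ ε * (‖x - y‖ / X) := by
      have : R⁻¹ ≤ ε / X := by
        rw [inv_eq_one_div, div_le_div_iff₀ hR hx0]
        linarith
      calc _ ≤ ε / X * ‖x - y‖ := by gcongr
        _ = _ := by ring
    have h2 : |φ (ε * Real.log X) * χ (R⁻¹ • x) - φ (ε * Real.log Y) * χ (R⁻¹ • y)| ≤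
        |φ (ε * Real.log X) - φ (ε * Real.log Y)| + |χ (R⁻¹ • x) - χ (R⁻¹ • y)| := by
      have e : φ (ε * Real.log X) * χ (R⁻¹ • x) - φ (ε * Real.log Y) * χ (R⁻¹ • y) =
        (φ (ε * Real.log X) - φ (ε * Real.log Y)) * χ (R⁻¹ • x) +
          φ (ε * Real.log Y) * (χ (R⁻¹ • x) - χ (R⁻¹ • y)) := by ring
      rw [e]
      refine (abs_add_le _ _).trans (add_le_add ?_ ?_)
      · rw [abs_mul, abs_of_nonneg c1]
        exact mul_le_of_le_one_right (abs_nonneg _) c2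
      · rw [abs_mul, abs_of_nonneg b3]
        exact mul_le_of_le_one_left (abs_nonneg _) b4
    calc _ ≤ _ := h2
      _ ≤ L * (ε * |Real.log (Y / X)|) + L * (ε * (‖x - y‖ / X)) := by
        refine add_le_add hA (hB.trans (by gcongr))
      _ = _ := by ring

lemma measurable_vv (hφ : Continuous φ) (hχ : Continuous χ) : Measurable (vv n m φ χ ε R) := by
  have h1 := measurable_pnorm (n + 1 + m) (n + 1)
  have h2 := hφ.measurable
  have h3 := hχ.measurable
  unfold vv
  refine Measurable.ite (h1 (measurableSet_singleton 0)) measurable_const ?_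
  fun_prop

/-- The truncated ground state is an admissible test function supported away from `K`. -/
lemma vv_test (hφ : ∀ x, 2 ≤ ‖x‖ → φ x = 0) (hχ : ∀ x, 2 ≤ ‖x‖ → χ x = 0)
    (hφc : ContDiff ℝ 1 φ) (hχc : ContDiff ℝ 1 χ) (hε : 0 < ε) (hR : 0 < R)
    (γ : ℝ) (u : E (n + 1 + m) → ℝ)
    (hu : ∀ x, u x = pnorm (n + 1 + m) (n + 1) x ^ (-γ) * vv n m φ χ ε R x) :
    ContDiff ℝ 1 u ∧ HasCompactSupport u ∧
      ∀ x, pnorm (n + 1 + m) (n + 1) x = 0 → x ∉ tsupport u := by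
  have hcont := continuous_pnorm (n + 1 + m) (n + 1)
  have hT : ∀ x, u x ≠ 0 → x ∈ TT n m (2 * (1 / ε)) (2 * R) := by
    intro x hx
    refine vv_mem hφ hχ hε hR fun h0 => hx ?_
    rw [hu, h0, mul_zero]
  have hlow : ∀ x, u x ≠ 0 → exp (-(2 * (1 / ε))) ≤ pnorm (n + 1 + m) (n + 1) x := fun x hx =>
    ((abs_log_le_iff (hT x hx).1.1).1 (hT x hx).1.2).1
  have hK : ∀ x, pnorm (n + 1 + m) (n + 1) x = 0 → x ∉ tsupport u := by
    intro x hx hxs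
    have hsub : tsupport u ⊆ {x | exp (-(2 * (1 / ε))) ≤ pnorm (n + 1 + m) (n + 1) x} :=
      closure_minimal hlow (isClosed_le continuous_const hcont)
    have := hsub hxs
    rw [mem_ofPred_eq, hx] at this
    linarith [exp_pos (-(2 * (1 / ε)))]
  refine ⟨?_, ?_, hK⟩
  · rw [contDiff_iff_contDiffAt]
    intro x
    by_cases hx : pnorm (n + 1 + m) (n + 1) x = 0
    · have h0 : u =ᶠ[𝓝 x] fun _ => 0 := notMem_tsupport_iff_eventuallyEq.1 (hK x hx)
      exact contDiffAt_const.congr_of_eventuallyEq h0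
    · have hN := contDiffAt_pnorm _ _ x hx
      have h0 : u =ᶠ[𝓝 x] fun x => pnorm (n + 1 + m) (n + 1) x ^ (-γ) *
          (φ (ε * Real.log (pnorm (n + 1 + m) (n + 1) x)) * χ (R⁻¹ • x)) := by
        filter_upwards [hcont.continuousAt.eventually_ne hx] with y hy
        rw [hu, vv, if_neg hy]
      refine ContDiffAt.congr_of_eventuallyEq ?_ h0
      refine (hN.rpow_const_of_ne hx).mul (ContDiffAt.mul ?_ ?_)
      · exact hφc.contDiffAt.comp x (contDiffAt_const.mul (hN.log hx))
      · exact hχc.contDiffAt.comp x (contDiff_const_smul R⁻¹).contDiffAt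
  · refine HasCompactSupport.of_support_subset_isCompact
      (isCompact_closedBall (0 : E (n + 1 + m)) (2 * R)) fun x hx => ?_
    simpa using (hT x hx).2

end

/-- Sharpness of the constant. -/
lemma Adm.sharp (h : Adm n s p α β) {c : ℝ} (hc : CC (n + 1 + m) (n + 1) s p α β < c) :
    ∃ u : E (n + 1 + m) → ℝ, ContDiff ℝ 1 u ∧ HasCompactSupport u ∧
      (∀ x, pnorm (n + 1 + m) (n + 1) x = 0 → x ∉ tsupport u) ∧ u ≠ 0 ∧
      En n m s p α β u ≤ ENNReal.ofReal c *
        Wt n m (α + β - s * p) (fun x => ENNReal.ofReal (|u x| ^ p)) := by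
  have hp := h.p_pos
  have hC0 := h.CC_nonneg (m := m)
  obtain ⟨φ, L₁, hφc, hL₁, hφL, hφ0, hφ1, hφi, hφo⟩ := exists_cutoff ℝ
  obtain ⟨χ, L₂, hχc, hL₂, hχL, hχ0, hχ1, hχi, hχo⟩ := exists_cutoff (E (n + 1 + m))
  set L := max L₁ L₂ + 1 with hL
  have hLpos : 0 < L := by have := le_max_left L₁ L₂; linarith
  have hφL' : ∀ x y, |φ x - φ y| ≤ L * ‖x - y‖ := fun x y => (hφL x y).trans (by
    gcongr; have := le_max_left L₁ L₂; linarith)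
  have hχL' : ∀ x y, |χ x - χ y| ≤ L * ‖x - y‖ := fun x y => (hχL x y).trans (by
    gcongr; have := le_max_right L₁ L₂; linarith)
  set C := CC (n + 1 + m) (n + 1) s p α β with hC
  -- the parameter `t` of the convexity inequality
  obtain ⟨t, ht, htC⟩ : ∃ t ∈ Ioo (0 : ℝ) 1, (1 - t) ^ (1 - p) * C < c := by
    have hcont : ContinuousAt (fun t : ℝ => (1 - t) ^ (1 - p) * C) 0 := by
      refine ContinuousAt.mul (ContinuousAt.rpow_const (by fun_prop) (Or.inl (by norm_num))) ?_
      exact continuousAt_const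
    have h1 : ∀ᶠ t in 𝓝[>] (0 : ℝ), (1 - t) ^ (1 - p) * C < c :=
      (hcont.eventually_lt continuousAt_const (by simpa using hc)).filter_mono nhdsWithin_le_nhds
    obtain ⟨t, h2, h3⟩ := (h1.and (Ioo_mem_nhdsGT (show (0 : ℝ) < 1 by norm_num))).exists
    exact ⟨t, h3, h2⟩
  set η := c - (1 - t) ^ (1 - p) * C with hη
  have hη0 : 0 < η := by linarith
  -- the flatness `ε` of the cutoff
  obtain ⟨ε, hε, hκ⟩ : ∃ ε ∈ Ioo (0 : ℝ) (1 / 2), ENNReal.ofReal (t ^ (1 - p)) *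
      (ENNReal.ofReal (2 * 4 ^ m) * (JJ n m (s * p) (fun r t =>
            ENNReal.ofReal (r ^ (β - gam n s p α β * p) * GG (L * ε) r t ^ p)) +
          JJ n m (s * p) (fun r t => ENNReal.ofReal (r ^ α * GG (L * ε) r t ^ p)))) <
        ENNReal.ofReal η := by
    have hαl := h.hα
    have t1 := tendsto_JJ_GG (n := n) (m := m) h.σ_pos h.σ_lt
      (show -((n + 1 : ℕ) : ℝ) < β - gam n s p α β * p by rw [h.gam_mul]; linarith [hαl.2])
      (by rw [h.gam_mul]; linarith [hαl.1])
    have t2 := tendsto_JJ_GG (n := n) (m := m) h.σ_pos h.σ_lt hαl.1 hαl.2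
    have t3 : Tendsto (fun ε => L * ε) (𝓝[>] 0) (𝓝[>] 0) := by
      refine tendsto_nhdsWithin_iff.2 ⟨?_, ?_⟩
      · have : Tendsto (fun ε => L * ε) (𝓝 0) (𝓝 (L * 0)) := (continuous_const_mul L).tendsto 0
        rw [mul_zero] at this
        exact this.mono_left nhdsWithin_le_nhds
      · filter_upwards [self_mem_nhdsWithin] with x hx
        exact mul_pos hLpos hx
    have t4 := ENNReal.Tendsto.const_mul (a := ENNReal.ofReal (t ^ (1 - p)))
      (ENNReal.Tendsto.const_mul (a := ENNReal.ofReal (2 * 4 ^ m)) ((t1.add t2).comp t3)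
        (Or.inr ENNReal.ofReal_ne_top)) (Or.inr ENNReal.ofReal_ne_top)
    rw [add_zero, mul_zero, mul_zero] at t4
    obtain ⟨ε, h1, h2⟩ := ((t4.eventually_lt_const (ENNReal.ofReal_pos.2 hη0)).and
      (Ioo_mem_nhdsGT (show (0 : ℝ) < 1 / 2 by norm_num))).exists
    exact ⟨ε, h2, h1⟩
  have hε0 := hε.1
  set R := exp (2 * (1 / ε)) / ε with hR
  have hR0 : 0 < R := by positivity
  have hRε : exp (2 * (1 / ε)) ≤ ε * R := by rw [hR]; field_simp; exact le_rfl
  have hR2 : 2 * exp (1 / ε) ≤ R := by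
    rw [hR, le_div_iff₀ hε0, two_mul (1 / ε), Real.exp_add]
    have h1 : 1 ≤ exp (1 / ε) := Real.one_le_exp (by positivity)
    nlinarith [hε.2]
  set γ := gam n s p α β with hγ
  let u : E (n + 1 + m) → ℝ := fun x => pnorm (n + 1 + m) (n + 1) x ^ (-γ) * vv n m φ χ ε R x
  obtain ⟨hu1, hu2, hu3⟩ := vv_test hφo hχo hφc hχc hε0 hR0 γ u fun x => rfl
  set D := Wt n m (α + β - s * p) (fun x => ENNReal.ofReal (|u x| ^ p)) with hD
  have hup := h.upper (vv n m φ χ ε R) (measurable_vv hφc.continuous hχc.continuous)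
    (TT n m (2 * (1 / ε)) (2 * R)) (measurableSet_TT _ _ _ _)
    (fun x hx => by_contra fun h0 => hx (vv_mem hφo hχo hε0 hR0 h0))
    (μ := L * ε) (by positivity)
    (fun x y hx _ hy => vv_flat hLpos.le hφL' hχL' hφ0 hφ1 hχ0 hχ1 hε0 hR0 hRε x y hx hy)
    u (fun x => rfl) ht.1 ht.2
  have hin : Dset n m s p α β (TT n m (1 / ε) R) ≤ D := by
    refine Wt_mono fun x => ?_
    refine indicator_apply_le' (fun hx => ENNReal.ofReal_le_ofReal (le_of_eq ?_)) fun _ => zero_le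
    have hx0 := hx.1.1
    simp only [u]
    rw [vv_eq_one hφi hχi hε0 hR0 hx, mul_one, abs_of_pos (by positivity), ← Real.rpow_mul hx0.le]
  have hdoub := (h.Dset_doubling (m := m) (l := 1 / ε) (by positivity) hR2).trans
    (mul_le_mul_right hin _)
  have hune : u ≠ 0 := by
    intro h0
    have h1 : vv n m φ χ ε R (jn (eLast n) (0 : E m)) = 1 := by
      refine vv_eq_one hφi hχi hε0 hR0 ⟨?_, ?_⟩
      · rw [pnorm_e, Real.log_one, abs_zero]
        exact ⟨one_pos, by positivity⟩
      · rw [norm_e]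
        have : 1 ≤ exp (1 / ε) := Real.one_le_exp (by positivity)
        linarith
    have h2 := congrFun h0 (jn (eLast n) (0 : E m))
    simp only [u, h1, pnorm_e, Real.one_rpow, Pi.zero_apply] at h2
    norm_num at h2
  rw [← hD, ← hC] at hup
  refine ⟨u, hu1, hu2, hu3, hune, hup.trans ?_⟩
  have hc_eq : ENNReal.ofReal c = ENNReal.ofReal ((1 - t) ^ (1 - p)) * ENNReal.ofReal C +
      ENNReal.ofReal η := by
    have := ht.2
    have h2 : 0 < 1 - t := by linarith
    rw [← ENNReal.ofReal_mul (by positivity), ← ENNReal.ofReal_add (by positivity) hη0.le]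
    congr 1; rw [hη]; ring
  rw [← hD, hc_eq, add_mul _ _ D]
  refine add_le_add (le_of_eq (by ring)) ?_
  refine le_trans ?_ (mul_le_mul_left hκ.le D)
  refine (mul_le_mul_right (mul_le_mul_left hdoub _) _).trans (le_of_eq (by ring))

end FracHardy

namespace FracHardy

variable {n m : ℕ} {s p α β σ a b : ℝ}

/-! ### From extended nonnegative to real integrals -/

/-- The Hardy quotient written with Bochner integrals. -/
lemma Adm.ratio_eq (h : Adm n s p α β) (u : E (n + 1 + m) → ℝ) (hu : ContDiff ℝ 1 u)
    (hc : HasCompactSupport u)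
    (hSK : ((n + 1 : ℕ) : ℝ) + α + β < s * p →
      ∀ x, pnorm (n + 1 + m) (n + 1) x = 0 → x ∉ tsupport u) :
    (∫ x, ∫ y, |u x - u y| ^ p * ‖x - y‖ ^ (-((n + 1 + m : ℕ) : ℝ) - s * p)
        * pnorm (n + 1 + m) (n + 1) x ^ α * pnorm (n + 1 + m) (n + 1) y ^ β) /
      (∫ x, |u x| ^ p * pnorm (n + 1 + m) (n + 1) x ^ (α + β - s * p)) =
    (En n m s p α β u).toReal /
      (Wt n m (α + β - s * p) (fun x => ENNReal.ofReal (|u x| ^ p))).toReal := by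
  have hE := (h.En_lt_top u hu hc hSK).1
  have hum : Measurable u := hu.continuous.measurable
  have hN := measurable_pnorm (n + 1 + m) (n + 1)
  have hNn := pnorm_nonneg (n + 1 + m) (n + 1)
  have hmF : Measurable (Function.uncurry fun x y : E (n + 1 + m) =>
      ENNReal.ofReal (|u x - u y| ^ p) * Ker n m (s * p) α β x y) := by
    have h1 := measurable_Ker (n := n) (m := m) (σ := s * p) (a := α) (b := β)
    refine Measurable.mul ?_ h1
    fun_prop
  congr 1
  · have hin : ∀ x, ∫ y, |u x - u y| ^ p * ‖x - y‖ ^ (-((n + 1 + m : ℕ) : ℝ) - s * p)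
        * pnorm (n + 1 + m) (n + 1) x ^ α * pnorm (n + 1 + m) (n + 1) y ^ β =
        (∫⁻ y, ENNReal.ofReal (|u x - u y| ^ p) * Ker n m (s * p) α β x y).toReal := by
      intro x
      have hx := hNn x
      rw [integral_eq_lintegral_of_nonneg_ae]
      · congr 1
        refine lintegral_congr fun y => ?_
        rw [Ker, ← ENNReal.ofReal_mul (by positivity)]
        congr 1; ring
      · refine Eventually.of_forall fun y => ?_
        have hy := hNn y
        simp only [Pi.zero_apply]
        positivity
      · refine Measurable.aestronglyMeasurable ?_
        fun_prop
    simp_rw [hin]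
    rw [En]
    exact integral_toReal hmF.lintegral_prod_right.aemeasurable
      (ae_lt_top hmF.lintegral_prod_right hE.ne)
  · rw [integral_eq_lintegral_of_nonneg_ae]
    · unfold Wt
      congr 1
      refine lintegral_congr fun x => ?_
      rw [← ENNReal.ofReal_mul (by positivity)]
    · refine Eventually.of_forall fun x => ?_
      have hx := hNn x
      simp only [Pi.zero_apply]
      positivity
    · refine Measurable.aestronglyMeasurable ?_
      fun_prop

end FracHardy

/-- **Optimality of the constant** in the sharp weighted fractional Hardy inequality with
singularity on the flat submanifold `K`: the infimum of the Hardy quotients over all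
admissible `u ≢ 0` equals `𝒞(d,s,p,k,α,β)`. -/
theorem weighted_fractional_hardy_sharp
    (d k : ℕ) (s p α β : ℝ)
    (hd : 1 ≤ d) (hp : 1 ≤ p) (hs : s ∈ Ioo (0 : ℝ) 1)
    (hk : 1 ≤ k) (hkd : k ≤ d)
    (hα : α ∈ Ioo (-(k : ℝ)) (s * p)) (hβ : β ∈ Ioo (-(k : ℝ)) (s * p))
    (hαβ : α + β ∈ Ioo (-(k : ℝ)) (s * p))
    (hne : s * p ≠ k + α + β) :
    sInf { c : ℝ | ∃ u : EuclideanSpace ℝ (Fin d) → ℝ,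
        ContDiff ℝ 1 u ∧ HasCompactSupport u ∧
        (k + α + β < s * p → ∀ x, pnorm d k x = 0 → x ∉ tsupport u) ∧
        u ≠ 0 ∧
        c = (∫ x, ∫ y, |u x - u y| ^ p * ‖x - y‖ ^ (-(d : ℝ) - s * p)
                * pnorm d k x ^ α * pnorm d k y ^ β) /
            (∫ x, |u x| ^ p * pnorm d k x ^ (α + β - s * p)) }
      = CC d k s p α β := by
  obtain ⟨n, rfl⟩ : ∃ n, k = n + 1 := ⟨k - 1, by omega⟩
  obtain ⟨m, rfl⟩ : ∃ m, d = n + 1 + m := ⟨d - (n + 1), by omega⟩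
  have h : FracHardy.Adm n s p α β := ⟨hp, hs.1, hs.2, hα, hβ, hαβ, hne⟩
  have hC0 := h.CC_nonneg (m := m)
  refine csInf_eq_of_forall_ge_of_forall_gt_exists_lt ?_ ?_ ?_
  · obtain ⟨u, h1, h2, h3, h4, -⟩ := h.sharp (m := m) (lt_add_one _)
    exact ⟨_, u, h1, h2, fun _ => h3, h4, rfl⟩
  · rintro c ⟨u, h1, h2, h3, h4, rfl⟩
    obtain ⟨hE, hD⟩ := h.En_lt_top u h1 h2 h3
    have hD0 := FracHardy.Wt_ne_zero (p := p) u h1.continuous h4 (α + β - s * p)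
    have hlow := h.lower u h1.continuous.measurable hD
    rw [h.ratio_eq u h1 h2 h3, le_div_iff₀ (ENNReal.toReal_pos hD0 hD.ne)]
    have := ENNReal.toReal_mono hE.ne hlow
    rw [ENNReal.toReal_mul, ENNReal.toReal_ofReal hC0] at this
    linarith
  · intro c hc
    obtain ⟨c', hc1, hc2⟩ := exists_between hc
    obtain ⟨u, h1, h2, h3, h4, h5⟩ := h.sharp (m := m) hc1
    obtain ⟨hE, hD⟩ := h.En_lt_top u h1 h2 fun _ => h3
    have hD0 := FracHardy.Wt_ne_zero (p := p) u h1.continuous h4 (α + β - s * p)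
    refine ⟨_, ⟨u, h1, h2, fun _ => h3, h4, rfl⟩, lt_of_le_of_lt ?_ hc2⟩
    rw [h.ratio_eq u h1 h2 fun _ => h3, div_le_iff₀ (ENNReal.toReal_pos hD0 hD.ne)]
    have := ENNReal.toReal_mono (ENNReal.mul_ne_top ENNReal.ofReal_ne_top hD.ne) h5
    rwa [ENNReal.toReal_mul, ENNReal.toReal_ofReal (hC0.trans hc1.le)] at this
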